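/- Let d ≥ 2, let Σ ⊂ GL_d(ℝ) be a compact subset, and let μ₀ be a Borel probability measure supported in Σ which is quasi-irreducible and satisfies L_1(μ₀) > L_2(μ₀). Then there exist α ∈ (0,1], θ > 1, C > 0 and ε > 0 such that for every Borel probability measure μ supported in Σ with ‖μ − μ₀‖_TV < ε and every n ≥ 1, k_α(μ^{*n}) ≤ C θ^{−n}. -/

import Mathlib

open MeasureTheory Filter
open scoped LinearAlgebra.Projectivization

noncomputable section

abbrev GLd (d : ℕ) := GL (Fin d) ℝ
abbrev Ed (d : ℕ) := EuclideanSpace ℝ (Fin d)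
abbrev Pd (d : ℕ) := ℙ ℝ (Ed d)

variable {d : ℕ}

instance : MeasurableSpace (GLd d) := borel _
instance : BorelSpace (GLd d) := ⟨rfl⟩

instance : TopologicalSpace (Pd d) :=
  (instTopologicalSpaceQuotient : TopologicalSpace (Quotient (projectivizationSetoid ℝ (Ed d))))
instance : MeasurableSpace (Pd d) := borel _
instance : BorelSpace (Pd d) := ⟨rfl⟩

/-- The continuous linear map on Euclidean space induced by `g ∈ GL_d(ℝ)`. -/
def glCLM (g : GLd d) : Ed d →L[ℝ] Ed d :=
  Matrix.toEuclideanCLM (𝕜 := ℝ) (g : Matrix (Fin d) (Fin d) ℝ)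

/-- The operator norm of `g ∈ GL_d(ℝ)`. -/
def gnorm (g : GLd d) : ℝ := ‖glCLM g‖

lemma glCLM_leftInv (g : GLd d) (v : Ed d) : glCLM g⁻¹ (glCLM g v) = v := by
  have h : glCLM (d := d) g⁻¹ * glCLM g = 1 := by
    rw [glCLM, glCLM, ← map_mul]
    norm_cast
    rw [inv_mul_cancel g]
    exact map_one _
  calc glCLM g⁻¹ (glCLM g v) = (glCLM g⁻¹ * glCLM g) v := rfl
    _ = v := by rw [h]; rfl

lemma glLinear_injective (g : GLd d) : Function.Injective (glCLM g).toLinearMap :=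
  Function.LeftInverse.injective (g := (glCLM g⁻¹)) (fun v => glCLM_leftInv g v)

/-- The projective action of `g ∈ GL_d(ℝ)` on `ℙ(ℝ^d)`. -/
def pact (g : GLd d) : Pd d → Pd d :=
  Projectivization.map (glCLM g).toLinearMap (glLinear_injective g)

/-- The projective distance `δ` on `ℙ(ℝ^d)`, computed on representatives. -/
def pdelta (x y : Pd d) : ℝ :=
  Real.sqrt (‖x.rep‖ ^ 2 * ‖y.rep‖ ^ 2 - (inner ℝ x.rep y.rep : ℝ) ^ 2) /
    (‖x.rep‖ * ‖y.rep‖)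

/-- Convolution of two measures on `GL_d(ℝ)`. -/
def mconv (μ ν : Measure (GLd d)) : Measure (GLd d) :=
  (μ.prod ν).map (fun p => p.1 * p.2)

/-- `n`-fold convolution power of a measure on `GL_d(ℝ)`. -/
def mconvN (μ : Measure (GLd d)) : ℕ → Measure (GLd d)
  | 0 => Measure.dirac 1
  | n + 1 => if n = 0 then μ else mconv (mconvN μ n) μ

/-- The top Lyapunov exponent of a (compactly supported) measure on `GL_d(ℝ)`. -/
def L1 (μ : Measure (GLd d)) : ℝ :=
  limUnder atTop (fun n : ℕ => (n : ℝ)⁻¹ * ∫ g, Real.log (gnorm g) ∂(mconvN μ n))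

/-- `N₂ g = s₁(g)s₂(g)`, the product of the two largest singular values. -/
def N2 (g : GLd d) : ℝ :=
  sSup { x | ∃ p q : Ed d, ‖p‖ = 1 ∧ ‖q‖ = 1 ∧ (inner ℝ p q : ℝ) = 0 ∧
    x = Real.sqrt (‖glCLM g p‖ ^ 2 * ‖glCLM g q‖ ^ 2 -
      (inner ℝ (glCLM g p) (glCLM g q) : ℝ) ^ 2) }

/-- `L₁(μ) + L₂(μ)`. -/
def L12 (μ : Measure (GLd d)) : ℝ :=
  limUnder atTop (fun n : ℕ => (n : ℝ)⁻¹ * ∫ g, Real.log (N2 g) ∂(mconvN μ n))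

/-- The second Lyapunov exponent. -/
def L2 (μ : Measure (GLd d)) : ℝ := L12 μ - L1 μ

/-- The top Lyapunov exponent of the restriction of `μ` to an (invariant) subspace `V`. -/
def L1rest (μ : Measure (GLd d)) (V : Submodule ℝ (Ed d)) : ℝ :=
  limUnder atTop (fun n : ℕ => (n : ℝ)⁻¹ *
    ∫ g, Real.log ‖LinearMap.toContinuousLinearMap ((glCLM g).toLinearMap.domRestrict V)‖
      ∂(mconvN μ n))

/-- Quasi-irreducibility of a measure on `GL_d(ℝ)`. -/
def QuasiIrreducible (μ : Measure (GLd d)) : Prop :=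
  ¬ ∃ V : Submodule ℝ (Ed d), V ≠ ⊥ ∧ V ≠ ⊤ ∧
    (∀ᵐ g ∂μ, V.map (glCLM g).toLinearMap = V) ∧ L1rest μ V < L1 μ

/-- Irreducibility of a measure on `GL_d(ℝ)`. -/
def Irred (μ : Measure (GLd d)) : Prop :=
  ¬ ∃ V : Submodule ℝ (Ed d), V ≠ ⊥ ∧ V ≠ ⊤ ∧
    (∀ᵐ g ∂μ, V.map (glCLM g).toLinearMap = V)

/-- The Markov operator associated with a measure on `GL_d(ℝ)`. -/
def Qop (μ : Measure (GLd d)) (φ : Pd d → ℝ) : Pd d → ℝ :=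
  fun v => ∫ g, φ (pact g v) ∂μ

/-- The average `α`-Hölder constant of a measure on `GL_d(ℝ)`. -/
def kalpha (α : ℝ) (μ : Measure (GLd d)) : ℝ :=
  sSup { x | ∃ v₁ v₂ : Pd d, v₁ ≠ v₂ ∧
    x = ∫ g, (pdelta (pact g v₁) (pact g v₂) / pdelta v₁ v₂) ^ α ∂μ }

/-- The `α`-Hölder seminorm of an observable on `ℙ(ℝ^d)`. -/
def valpha (α : ℝ) (φ : Pd d → ℝ) : ℝ :=
  sSup { x | ∃ v₁ v₂ : Pd d, v₁ ≠ v₂ ∧ x = |φ v₁ - φ v₂| / pdelta v₁ v₂ ^ α }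

/-- `φ` is `α`-Hölder: `v_α(φ) < ∞`. -/
def IsHolder (α : ℝ) (φ : Pd d → ℝ) : Prop :=
  BddAbove { x | ∃ v₁ v₂ : Pd d, v₁ ≠ v₂ ∧ x = |φ v₁ - φ v₂| / pdelta v₁ v₂ ^ α }

/-- The total variation distance between two finite measures. -/
def tvDist (μ ν : Measure (GLd d)) [IsFiniteMeasure μ] [IsFiniteMeasure ν] : ℝ :=
  ((μ.toSignedMeasure - ν.toSignedMeasure).totalVariation Set.univ).toReal

/-- A measure is compactly supported. -/
def CompactlySupported (μ : Measure (GLd d)) : Prop :=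
  ∃ K : Set (GLd d), IsCompact K ∧ μ Kᶜ = 0

/-- `S` is the (topological) support of `μ`. -/
def IsSupport (μ : Measure (GLd d)) (S : Set (GLd d)) : Prop :=
  μ Sᶜ = 0 ∧ ∀ x ∈ S, ∀ U : Set (GLd d), IsOpen U → x ∈ U → 0 < μ U

/-- A measure `η` on `ℙ(ℝ^d)` is `μ`-stationary. -/
def Stationary (μ : Measure (GLd d)) (η : Measure (Pd d)) : Prop :=
  ∀ φ : Pd d → ℝ, Continuous φ → (∃ C, ∀ v, |φ v| ≤ C) →
    ∫ v, φ v ∂η = ∫ g, ∫ v, φ (pact g v) ∂η ∂μ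

lemma glCLM_mul (g h : GLd d) : glCLM (g * h) = glCLM g * glCLM h := by
  rw [glCLM, glCLM, glCLM, ← map_mul]; norm_cast

lemma glCLM_mul_apply (g h : GLd d) (v : Ed d) : glCLM (g * h) v = glCLM g (glCLM h v) := by
  rw [glCLM_mul]; rfl

lemma glCLM_one : glCLM (1 : GLd d) = 1 := by
  rw [glCLM]; norm_cast; exact map_one _

lemma continuous_glCLM : Continuous (glCLM (d := d)) := by
  have h1 : Continuous (fun g : GLd d => (g : Matrix (Fin d) (Fin d) ℝ)) := Units.continuous_val
  have h2 : Continuous (fun A : Matrix (Fin d) (Fin d) ℝ =>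
      Matrix.toEuclideanCLM (n := Fin d) (𝕜 := ℝ) A) := by
    exact LinearMap.continuous_of_finiteDimensional
      (Matrix.toEuclideanCLM (n := Fin d) (𝕜 := ℝ)).toAlgEquiv.toLinearMap
  exact h2.comp h1

lemma continuous_glCLM_apply (v : Ed d) : Continuous (fun g : GLd d => glCLM g v) :=
  continuous_glCLM.clm_apply continuous_const

instance : SecondCountableTopology (Matrix (Fin d) (Fin d) ℝ) :=
  inferInstanceAs (SecondCountableTopology (Fin d → Fin d → ℝ))

instance : SecondCountableTopology (Matrix (Fin d) (Fin d) ℝ)ᵐᵒᵖ :=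
  MulOpposite.opHomeomorph.symm.isInducing.secondCountableTopology

instance instSCGL : SecondCountableTopology (GLd d) :=
  (Units.isEmbedding_embedProduct).isInducing.secondCountableTopology


lemma glCLM_ne_zero (g : GLd d) {v : Ed d} (hv : v ≠ 0) : glCLM g v ≠ 0 := by
  intro h
  apply hv
  have := glCLM_leftInv g v
  rw [h, map_zero] at this
  exact this.symm

/-- Norm bound predicate. -/
def NB (c : ℝ) (g : GLd d) : Prop := gnorm g ≤ Real.exp c ∧ gnorm g⁻¹ ≤ Real.exp c

lemma gnorm_mul_le (g h : GLd d) : gnorm (g * h) ≤ gnorm g * gnorm h := by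
  unfold gnorm; rw [glCLM_mul]; exact norm_mul_le _ _

lemma gnorm_nonneg (g : GLd d) : 0 ≤ gnorm g := norm_nonneg _

lemma NB.mul {a b : ℝ} {g h : GLd d} (hg : NB a g) (hh : NB b h) : NB (a + b) (g * h) := by
  constructor
  · rw [Real.exp_add]
    exact (gnorm_mul_le _ _).trans
      (mul_le_mul hg.1 hh.1 (gnorm_nonneg _) (Real.exp_pos _).le)
  · rw [add_comm, Real.exp_add, mul_inv_rev]
    exact (gnorm_mul_le _ _).trans
      (mul_le_mul hh.2 hg.2 (gnorm_nonneg _) (Real.exp_pos _).le)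

lemma NB.inv {a : ℝ} {g : GLd d} (hg : NB a g) : NB a g⁻¹ := ⟨hg.2, by simpa using hg.1⟩

lemma NB_one : NB 0 (1 : GLd d) := by
  have : gnorm (1 : GLd d) ≤ 1 := by
    unfold gnorm; rw [glCLM_one]; exact ContinuousLinearMap.norm_id_le
  constructor <;> simpa using this

lemma NB.le {c : ℝ} {g : GLd d} (hg : NB c g) (v : Ed d) :
    ‖glCLM g v‖ ≤ Real.exp c * ‖v‖ :=
  ((glCLM g).le_opNorm v).trans (mul_le_mul_of_nonneg_right hg.1 (norm_nonneg _))

lemma NB.ge {c : ℝ} {g : GLd d} (hg : NB c g) (v : Ed d) :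
    Real.exp (-c) * ‖v‖ ≤ ‖glCLM g v‖ := by
  have := hg.inv.le (glCLM g v)
  rw [glCLM_leftInv] at this
  calc Real.exp (-c) * ‖v‖ ≤ Real.exp (-c) * (Real.exp c * ‖glCLM g v‖) := by gcongr
    _ = ‖glCLM g v‖ := by rw [← mul_assoc, ← Real.exp_add]; simp

lemma NB.log_le {c : ℝ} {g : GLd d} (hg : NB c g) {v : Ed d} (hv : v ≠ 0) :
    |Real.log ‖glCLM g v‖ - Real.log ‖v‖| ≤ c := by
  have hv' : 0 < ‖v‖ := norm_pos_iff.2 hv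
  have hg' : 0 < ‖glCLM g v‖ := norm_pos_iff.2 (glCLM_ne_zero g hv)
  have h1 := Real.log_le_log hg' (hg.le v)
  have h2 := Real.log_le_log (by positivity) (hg.ge v)
  rw [Real.log_mul (Real.exp_pos _).ne' hv'.ne', Real.log_exp] at h1 h2
  rw [abs_le]; constructor <;> linarith

lemma exists_NB (S : Set (GLd d)) (hS : IsCompact S) : ∃ c : ℝ, 0 < c ∧ ∀ g ∈ S, NB c g := by
  have h1 : Continuous (fun g : GLd d => gnorm g) := continuous_glCLM.norm
  have h2 : Continuous (fun g : GLd d => gnorm g⁻¹) := h1.comp continuous_inv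
  obtain ⟨a, ha⟩ := hS.bddAbove_image h1.continuousOn
  obtain ⟨b, hb⟩ := hS.bddAbove_image h2.continuousOn
  refine ⟨max 1 (max a b), by positivity, fun g hg => ⟨?_, ?_⟩⟩
  · have := ha (Set.mem_image_of_mem _ hg)
    have h3 := Real.add_one_le_exp (max 1 (max a b))
    have : a ≤ max 1 (max a b) := by simp
    linarith
  · have := hb (Set.mem_image_of_mem _ hg)
    have h3 := Real.add_one_le_exp (max 1 (max a b))
    have : b ≤ max 1 (max a b) := by simp
    linarith

/-- Gram determinant -/
def Gr (p q : Ed d) : ℝ := ‖p‖ ^ 2 * ‖q‖ ^ 2 - (inner ℝ p q : ℝ) ^ 2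

lemma Gr_nonneg (p q : Ed d) : 0 ≤ Gr p q := by
  unfold Gr
  have := abs_real_inner_le_norm p q
  have h2 : (inner ℝ p q : ℝ) ^ 2 ≤ (‖p‖ * ‖q‖) ^ 2 := by
    rw [← sq_abs]; gcongr
  nlinarith

lemma Gr_add_smul (p q : Ed d) (c : ℝ) : Gr p (q + c • p) = Gr p q := by
  unfold Gr
  rw [norm_add_sq_real, inner_add_right, inner_smul_right, inner_smul_right, norm_smul,
    real_inner_self_eq_norm_sq, real_inner_comm p q, mul_pow, Real.norm_eq_abs, sq_abs]
  ring

lemma Gr_smul_smul (p q : Ed d) (a b : ℝ) : Gr (a • p) (b • q) = (a * b) ^ 2 * Gr p q := by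
  unfold Gr
  rw [inner_smul_left, inner_smul_right, norm_smul, norm_smul, mul_pow, mul_pow,
    Real.norm_eq_abs, Real.norm_eq_abs, sq_abs, sq_abs]
  simp
  ring

lemma N2_bdd (g : GLd d) : ∀ x ∈ { x | ∃ p q : Ed d, ‖p‖ = 1 ∧ ‖q‖ = 1 ∧ (inner ℝ p q : ℝ) = 0 ∧
    x = Real.sqrt (‖glCLM g p‖ ^ 2 * ‖glCLM g q‖ ^ 2 -
      (inner ℝ (glCLM g p) (glCLM g q) : ℝ) ^ 2) }, x ≤ gnorm g ^ 2 := by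
  rintro x ⟨p, q, hp, hq, -, rfl⟩
  apply Real.sqrt_le_iff.2 ⟨by positivity, ?_⟩
  have h1 := (glCLM g).le_opNorm p
  have h2 := (glCLM g).le_opNorm q
  rw [hp, mul_one] at h1
  rw [hq, mul_one] at h2
  change _ ≤ gnorm g at h1
  change _ ≤ gnorm g at h2
  calc _ ≤ ‖glCLM g p‖ ^ 2 * ‖glCLM g q‖ ^ 2 := by
        have := sq_nonneg (inner ℝ (glCLM g p) (glCLM g q) : ℝ); linarith
    _ ≤ gnorm g ^ 2 * gnorm g ^ 2 := by gcongr
    _ = _ := by ring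

lemma N2_nonneg (g : GLd d) : 0 ≤ N2 g := by
  apply Real.sSup_nonneg
  rintro x ⟨p, q, hp, hq, -, rfl⟩
  exact Real.sqrt_nonneg _

lemma N2_le (g : GLd d) : N2 g ≤ gnorm g ^ 2 :=
  Real.sSup_le (N2_bdd g) (by positivity)

/-- Key inequality. -/
lemma sqrt_Gr_le (g : GLd d) (p q : Ed d) :
    Real.sqrt (Gr (glCLM g p) (glCLM g q)) ≤ N2 g * Real.sqrt (Gr p q) := by
  by_cases hp : p = 0
  · subst hp; simp [Gr]
  have hp' : 0 < ‖p‖ := norm_pos_iff.2 hp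
  set c : ℝ := inner ℝ p q / ‖p‖ ^ 2 with hc
  set r : Ed d := q - c • p with hr
  have hq : q = r + c • p := by simp [hr]
  have horth : (inner ℝ p r : ℝ) = 0 := by
    rw [hr, inner_sub_right, inner_smul_right, real_inner_self_eq_norm_sq, hc]
    field_simp
    ring
  rw [hq, map_add, map_smul, Gr_add_smul, Gr_add_smul]
  by_cases hr0 : r = 0
  · rw [hr0]; simp [Gr]
  have hr' : 0 < ‖r‖ := norm_pos_iff.2 hr0
  have hmem : Real.sqrt (Gr (glCLM g (‖p‖⁻¹ • p)) (glCLM g (‖r‖⁻¹ • r))) ≤ N2 g := by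
    apply le_csSup ⟨_, N2_bdd g⟩
    refine ⟨‖p‖⁻¹ • p, ‖r‖⁻¹ • r, ?_, ?_, ?_, rfl⟩
    · rw [norm_smul, norm_inv, norm_norm, inv_mul_cancel₀ hp'.ne']
    · rw [norm_smul, norm_inv, norm_norm, inv_mul_cancel₀ hr'.ne']
    · rw [inner_smul_left, inner_smul_right, horth]; simp
  rw [map_smul, map_smul, Gr_smul_smul, Real.sqrt_mul (sq_nonneg _),
    Real.sqrt_sq (by positivity)] at hmem
  have h2 : Real.sqrt (Gr p r) = ‖p‖ * ‖r‖ := by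
    unfold Gr
    rw [horth, ← mul_pow]
    simp only [ne_eq, OfNat.ofNat_ne_zero, not_false_eq_true, zero_pow, sub_zero]
    exact Real.sqrt_sq (by positivity)
  rw [h2]
  calc _ = (‖p‖⁻¹ * ‖r‖⁻¹ * √(Gr (glCLM g p) (glCLM g r))) * (‖p‖ * ‖r‖) := by field_simp
    _ ≤ _ := by gcongr

lemma N2_mul_le (g h : GLd d) : N2 (g * h) ≤ N2 g * N2 h := by
  apply Real.sSup_le _ (mul_nonneg (N2_nonneg _) (N2_nonneg _))
  rintro x ⟨p, q, hp, hq, ho, rfl⟩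
  rw [glCLM_mul_apply, glCLM_mul_apply]
  have h1 := sqrt_Gr_le g (glCLM h p) (glCLM h q)
  have h2 := sqrt_Gr_le h p q
  have h3 : Real.sqrt (Gr p q) = 1 := by unfold Gr; rw [hp, hq, ho]; simp
  rw [h3, mul_one] at h2
  exact h1.trans (mul_le_mul_of_nonneg_left h2 (N2_nonneg _))

lemma one_le_N2_one (hd : 2 ≤ d) : 1 ≤ N2 (1 : GLd d) := by
  apply le_csSup ⟨_, N2_bdd 1⟩
  refine ⟨EuclideanSpace.single ⟨0, by omega⟩ 1, EuclideanSpace.single ⟨1, by omega⟩ 1, ?_, ?_, ?_, ?_⟩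
  · simp
  · simp
  · rw [EuclideanSpace.inner_single_left]; simp
  · rw [glCLM_one]; simp [EuclideanSpace.inner_single_left]

lemma N2_mul_inv (hd : 2 ≤ d) (g : GLd d) : 1 ≤ N2 g * N2 g⁻¹ := by
  have := N2_mul_le g g⁻¹
  rw [mul_inv_cancel] at this
  exact (one_le_N2_one hd).trans this

lemma N2_pos (hd : 2 ≤ d) (g : GLd d) : 0 < N2 g := by
  rcases (N2_nonneg g).lt_or_eq with h | h
  · exact h
  · have := N2_mul_inv hd g
    rw [← h] at this; linarith

lemma NB.N2_le {c : ℝ} {g : GLd d} (hg : NB c g) : N2 g ≤ Real.exp (2 * c) := by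
  have h := hg.1
  calc N2 g ≤ gnorm g ^ 2 := _root_.N2_le g
    _ ≤ Real.exp c ^ 2 := by gcongr; exact gnorm_nonneg _
    _ = _ := by rw [← Real.exp_nat_mul]; norm_num

lemma NB.log_N2 (hd : 2 ≤ d) {c : ℝ} {g : GLd d} (hg : NB c g) : |Real.log (N2 g)| ≤ 2 * c := by
  have h1 := Real.log_le_log (N2_pos hd g) hg.N2_le
  have h2 := Real.log_le_log (N2_pos hd g⁻¹) hg.inv.N2_le
  have h3 := Real.log_le_log one_pos (N2_mul_inv hd g)
  rw [Real.log_mul (N2_pos hd g).ne' (N2_pos hd _).ne', Real.log_one] at h3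
  rw [Real.log_exp] at h1 h2
  rw [abs_le]; constructor <;> linarith

lemma continuous_sqrtGr (p q : Ed d) :
    Continuous (fun g : GLd d => Real.sqrt (Gr (glCLM g p) (glCLM g q))) := by
  unfold Gr
  have h1 := continuous_glCLM_apply p
  have h2 := continuous_glCLM_apply q
  exact Real.continuous_sqrt.comp
    (((h1.norm.pow 2).mul (h2.norm.pow 2)).sub ((h1.inner h2).pow 2))

lemma measurable_N2 (hd : 2 ≤ d) : Measurable (N2 (d := d)) := by
  apply measurable_of_Ioi
  intro a
  have : N2 (d := d) ⁻¹' Set.Ioi a = ⋃ (p : Ed d) (q : Ed d)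
      (_ : ‖p‖ = 1 ∧ ‖q‖ = 1 ∧ (inner ℝ p q : ℝ) = 0),
      {g | a < Real.sqrt (Gr (glCLM g p) (glCLM g q))} := by
    ext g
    simp only [Set.mem_preimage, Set.mem_Ioi, Set.mem_iUnion, Set.mem_ofPred_eq]
    unfold N2
    rw [lt_csSup_iff ⟨_, N2_bdd g⟩]
    · constructor
      · rintro ⟨x, ⟨p, q, hp, hq, ho, rfl⟩, hx⟩
        exact ⟨p, q, ⟨hp, hq, ho⟩, hx⟩
      · rintro ⟨p, q, ⟨hp, hq, ho⟩, hx⟩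
        exact ⟨_, ⟨p, q, hp, hq, ho, rfl⟩, hx⟩
    · by_contra hne
      rw [Set.not_nonempty_iff_eq_empty] at hne
      have := N2_pos hd g
      unfold N2 at this
      rw [hne] at this
      simp at this
  rw [this]
  apply IsOpen.measurableSet
  refine isOpen_iUnion fun p => isOpen_iUnion fun q => isOpen_iUnion fun _ => ?_
  exact isOpen_lt continuous_const (continuous_sqrtGr p q)

/-- Sample space -/
abbrev Om (d : ℕ) := ℕ → GLd d

/-- iid law -/
def PP (μ : Measure (GLd d)) [IsProbabilityMeasure μ] : Measure (Om d) :=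
  Measure.infinitePi (fun _ : ℕ => μ)

instance (μ : Measure (GLd d)) [IsProbabilityMeasure μ] : IsProbabilityMeasure (PP μ) := by
  unfold PP; infer_instance

/-- prepend -/
def consO (x : GLd d × Om d) : Om d
  | 0 => x.1
  | n + 1 => x.2 n

/-- shift -/
def shO (ω : Om d) : Om d := fun n => ω (n + 1)

/-- random products -/
def SS : ℕ → Om d → GLd d
  | 0, _ => 1
  | n + 1, ω => SS n (shO ω) * ω 0

@[simp] lemma shO_cons (x : GLd d × Om d) : shO (consO x) = x.2 := rfl
@[simp] lemma cons_zero (x : GLd d × Om d) : consO x 0 = x.1 := rfl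

lemma SS_succ_cons (n : ℕ) (g : GLd d) (ω : Om d) : SS (n + 1) (consO (g, ω)) = SS n ω * g := rfl

lemma measurable_cons : Measurable (consO (d := d)) := by
  rw [measurable_pi_iff]
  intro n
  cases n with
  | zero => exact measurable_fst
  | succ n => exact (measurable_pi_apply n).comp measurable_snd

lemma measurable_sh : Measurable (shO (d := d)) := by
  rw [measurable_pi_iff]
  intro n
  exact measurable_pi_apply (n + 1)

lemma measurable_SS (n : ℕ) : Measurable (SS (d := d) n) := by
  induction n with
  | zero => exact measurable_const
  | succ n ih => exact (ih.comp measurable_sh).mul (measurable_pi_apply 0)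

lemma SS_add (m n : ℕ) (ω : Om d) : SS (m + n) ω = SS m (shO^[n] ω) * SS n ω := by
  induction n generalizing ω with
  | zero => simp [SS]
  | succ n ih =>
    change SS (m + n) (shO ω) * ω 0 = _
    rw [ih]
    simp only [Function.iterate_succ, Function.comp, SS, mul_assoc]

section withMeasure

variable (μ : Measure (GLd d)) [IsProbabilityMeasure μ]

lemma mp_cons : MeasurePreserving consO (μ.prod (PP μ)) (PP μ) := by
  refine ⟨measurable_cons, ?_⟩
  apply Measure.eq_infinitePi
  intro s t ht
  classical
  obtain ⟨N, hN⟩ : ∃ N, ∀ i ∈ s, i < N + 1 := by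
    obtain ⟨N, hN⟩ := s.bddAbove
    exact ⟨N, fun i hi => Nat.lt_succ_of_le (hN hi)⟩
  set t' : ℕ → Set (GLd d) := fun i => if i ∈ s then t i else Set.univ with ht'
  have ht'm : ∀ i, MeasurableSet (t' i) := by
    intro i; simp only [ht']; split_ifs
    · exact ht i
    · exact MeasurableSet.univ
  have e1 : Set.pi (s : Set ℕ) t = Set.pi (Finset.range (N + 1) : Set ℕ) t' := by
    ext ω
    simp only [Set.mem_pi, ht']
    constructor
    · intro h i _
      split_ifs with hi
      · exact h i hi
      · trivial
    · intro h i hi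
      have := h i (by simpa using hN i hi)
      have hi' : i ∈ s := hi
      simpa [hi'] using this
  have e2 : ∏ i ∈ s, μ (t i) = ∏ i ∈ Finset.range (N + 1), μ (t' i) := by
    rw [← Finset.prod_subset (s₁ := s) (s₂ := Finset.range (N + 1)) (f := fun i => μ (t' i))
      (fun i hi => Finset.mem_range.2 (hN i hi))]
    · apply Finset.prod_congr rfl
      intro i hi
      simp [ht', hi]
    · intro i _ hi
      simp [ht', hi]
  rw [e1, e2, Measure.map_apply measurable_cons
    (MeasurableSet.pi (Set.to_countable _) (fun i _ => ht'm i))]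
  have e3 : consO ⁻¹' (Set.pi (Finset.range (N + 1) : Set ℕ) t') =
      t' 0 ×ˢ Set.pi (Finset.range N : Set ℕ) (fun i => t' (i + 1)) := by
    ext ⟨g, ω⟩
    simp only [Set.mem_preimage, Set.mem_pi, Set.mem_prod, Finset.coe_range, Set.mem_Iio]
    constructor
    · intro h
      exact ⟨h 0 (by omega), fun i hi => h (i + 1) (by omega)⟩
    · rintro ⟨h0, h⟩ i hi
      cases i with
      | zero => exact h0
      | succ i => exact h i (by omega)
  rw [e3, Measure.prod_prod, PP, Measure.infinitePi_pi _ (fun i _ => ht'm _),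
    Finset.prod_range_succ', mul_comm]

lemma PP_apply {E : Set (Om d)} (hE : MeasurableSet E) :
    PP μ E = ∫⁻ g, PP μ {ω | consO (g, ω) ∈ E} ∂μ := by
  rw [← (mp_cons μ).measure_preimage hE.nullMeasurableSet,
    Measure.prod_apply (measurable_cons hE)]
  rfl

lemma mp_sh : MeasurePreserving shO (PP μ) (PP μ) := by
  refine ⟨measurable_sh, ?_⟩
  ext E hE
  rw [Measure.map_apply measurable_sh hE, PP_apply μ (measurable_sh hE)]
  simp

lemma mconv_dirac_one (ν : Measure (GLd d)) [IsProbabilityMeasure ν] :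
    mconv (Measure.dirac 1) ν = ν := by
  unfold mconv
  rw [Measure.dirac_prod, Measure.map_map (by fun_prop) (by fun_prop)]
  convert Measure.map_id
  ext x; simp

lemma mconvN_succ (n : ℕ) : mconvN μ (n + 1) = mconv (mconvN μ n) μ := by
  rw [mconvN]
  split_ifs with h
  · subst h; rw [mconvN, mconv_dirac_one]
  · rfl

lemma mconvN_eq (n : ℕ) : mconvN μ n = (PP μ).map (SS n) := by
  induction n with
  | zero =>
    have : (SS 0 : Om d → GLd d) = fun _ => 1 := rfl
    rw [mconvN, this, Measure.map_const]; simp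
  | succ n ih =>
    rw [mconvN_succ, ih, mconv]
    ext E hE
    rw [Measure.map_apply (by fun_prop) hE, Measure.map_apply (measurable_SS _) hE,
      PP_apply μ (measurable_SS _ hE)]
    have := Measure.isProbabilityMeasure_map (μ := PP μ) (measurable_SS (d := d) n).aemeasurable
    rw [Measure.prod_apply_symm (measurable_mul hE)]
    apply lintegral_congr
    intro g
    rw [Measure.map_apply (measurable_SS _)]
    · rfl
    · exact measurable_mul_const g hE

lemma integral_mconvN (n : ℕ) {φ : GLd d → ℝ} (hφ : Measurable φ) :
    ∫ g, φ g ∂(mconvN μ n) = ∫ ω, φ (SS n ω) ∂(PP μ) := by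
  rw [mconvN_eq, integral_map (measurable_SS n).aemeasurable hφ.aestronglyMeasurable]

lemma ae_all {K : Set (GLd d)} (hK : μ Kᶜ = 0) : ∀ᵐ ω ∂(PP μ), ∀ n : ℕ, ω n ∈ K := by
  rw [ae_all_iff]
  intro n
  have : (PP μ).map (fun ω => ω n) = μ := Measure.infinitePi_map_eval _ n
  apply ae_of_ae_map (f := fun ω : Om d => ω n) (p := fun g => g ∈ K)
    (measurable_pi_apply n).aemeasurable
  rw [this]
  exact hK

lemma SS_mem_submonoid {Γ : Submonoid (GLd d)} (n : ℕ) {ω : Om d} (h : ∀ n, ω n ∈ Γ) :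
    SS n ω ∈ Γ := by
  induction n generalizing ω with
  | zero => exact Γ.one_mem
  | succ n ih => exact Γ.mul_mem (ih (fun k => h (k + 1))) (h 0)

lemma SS_NB {c : ℝ} (n : ℕ) {ω : Om d} (h : ∀ n, NB c (ω n)) : NB (c * n) (SS n ω) := by
  induction n generalizing ω with
  | zero => simpa [SS] using NB_one
  | succ n ih =>
    have := (ih (ω := shO ω) (fun k => h (k + 1))).mul (h 0)
    push_cast
    rw [mul_add, mul_one]
    exact this

lemma shO_iter (n : ℕ) (ω : Om d) (k : ℕ) : (shO^[n] ω) k = ω (k + n) := by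
  induction n generalizing ω with
  | zero => rfl
  | succ n ih => rw [Function.iterate_succ, Function.comp, ih]; simp only [shO]; congr 1

lemma ae_mono_K {μ : Measure (GLd d)} {K K' : Set (GLd d)} (hK : μ Kᶜ = 0) (h : K ⊆ K') : μ K'ᶜ = 0 :=
  measure_mono_null (Set.compl_subset_compl.2 h) hK

lemma integrable_of_bound {φ : GLd d → ℝ} (hφ : Measurable φ) (n : ℕ) {C : ℝ}
    (h : ∀ᵐ ω ∂(PP μ), |φ (SS n ω)| ≤ C) : Integrable (fun ω => φ (SS n ω)) (PP μ) :=
  Integrable.of_bound (hφ.comp (measurable_SS n)).aestronglyMeasurable C h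

/-- existence of subadditive limits -/
lemma exists_lim {c C : ℝ} (hNB : μ {g | NB c g}ᶜ = 0) (Γ : Submonoid (GLd d))
    (hΓ : μ (Γ : Set (GLd d))ᶜ = 0) {φ : GLd d → ℝ} (hφ : Measurable φ)
    (hb : ∀ g ∈ Γ, ∀ a, NB a g → |φ g| ≤ C * a)
    (hsub : ∀ g ∈ Γ, ∀ h ∈ Γ, φ (g * h) ≤ φ g + φ h) :
    Tendsto (fun n : ℕ => (n : ℝ)⁻¹ * ∫ g, φ g ∂(mconvN μ n)) atTop
      (nhds (limUnder atTop (fun n : ℕ => (n : ℝ)⁻¹ * ∫ g, φ g ∂(mconvN μ n)))) := by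
  apply tendsto_nhds_limUnder
  have hbd : ∀ n : ℕ, ∀ᵐ ω ∂(PP μ), |φ (SS n ω)| ≤ C * (c * n) := by
    intro n
    filter_upwards [ae_all μ hNB, ae_all μ hΓ] with ω h1 h2
    exact hb _ (SS_mem_submonoid n h2) _ (SS_NB n h1)
  have hintg := fun n => integrable_of_bound μ hφ n (hbd n)
  have hsubadd : Subadditive (fun n : ℕ => ∫ ω, φ (SS n ω) ∂(PP μ)) := by
    intro m n
    have mpn := (mp_sh μ).iterate n
    have e : ∫ ω, φ (SS m ω) ∂(PP μ) = ∫ ω, φ (SS m (shO^[n] ω)) ∂(PP μ) := by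
      conv_lhs => rw [← mpn.map_eq]
      exact integral_map mpn.measurable.aemeasurable
        (hφ.comp (measurable_SS m)).aestronglyMeasurable
    have hi : Integrable (fun ω => φ (SS m (shO^[n] ω))) (PP μ) :=
      mpn.integrable_comp_of_integrable (hintg m)
    simp only
    rw [e, ← integral_add hi (hintg n)]
    apply integral_mono_ae (hintg _) (hi.add (hintg n))
    filter_upwards [ae_all μ hΓ] with ω h2
    rw [SS_add]
    exact hsub _ (SS_mem_submonoid m (fun k => by rw [shO_iter]; exact h2 _)) _
      (SS_mem_submonoid n h2)
  refine ⟨hsubadd.lim, ?_⟩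
  have hc : 0 ≤ C * c := by
    obtain ⟨ω, hω⟩ := (hbd 1).exists
    have := (abs_nonneg _).trans hω
    simpa using this
  have := hsubadd.tendsto_lim ⟨-(C * c), by
    rintro x ⟨n, rfl⟩
    rcases Nat.eq_zero_or_pos n with rfl | hn
    · simp [hc]
    have hn' : (0 : ℝ) < n := by exact_mod_cast hn
    simp only
    rw [le_div_iff₀ hn']
    have : ∫ ω, -(C * (c * n)) ∂(PP μ) ≤ ∫ ω, φ (SS n ω) ∂(PP μ) := by
      apply integral_mono_ae (integrable_const _) (hintg n)
      filter_upwards [hbd n] with ω h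
      exact (abs_le.1 h).1
    simp at this
    linarith⟩
  refine this.congr (fun n => ?_)
  rw [integral_mconvN μ n hφ, div_eq_inv_mul]

end withMeasure

/-- Event: the orbit of `v` grows at most like `exp (γ n)`. -/
def Bd (γ : ℝ) (v : Ed d) : Set (Om d) :=
  {ω | ∃ R : ℕ, ∀ n : ℕ, ‖glCLM (SS n ω) v‖ ≤ R * Real.exp (γ * n)}

/-- Finite time version. -/
def bnd (γ R : ℝ) (N : ℕ) (v : Ed d) : Set (Om d) :=
  {ω | ∀ n : ℕ, n ≤ N → ‖glCLM (SS n ω) v‖ ≤ R * Real.exp (γ * n)}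

lemma mem_Bd {γ : ℝ} {v : Ed d} {ω : Om d} :
    ω ∈ Bd γ v ↔ ∃ R : ℝ, ∀ n : ℕ, ‖glCLM (SS n ω) v‖ ≤ R * Real.exp (γ * n) := by
  constructor
  · rintro ⟨R, h⟩; exact ⟨R, h⟩
  · rintro ⟨R, h⟩
    obtain ⟨k, hk⟩ := exists_nat_ge R
    exact ⟨k, fun n => (h n).trans (by gcongr)⟩

lemma measurable_orbit (n : ℕ) (v : Ed d) : Measurable (fun ω : Om d => ‖glCLM (SS n ω) v‖) :=
  ((continuous_glCLM_apply v).norm.measurable).comp (measurable_SS n)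

lemma measurableSet_bnd (γ R : ℝ) (N : ℕ) (v : Ed d) : MeasurableSet (bnd γ R N v) := by
  have : bnd γ R N v = ⋂ (n : ℕ) (_ : n ≤ N),
      {ω | ‖glCLM (SS n ω) v‖ ≤ R * Real.exp (γ * n)} := by
    ext ω; simp [bnd]
  rw [this]
  exact MeasurableSet.iInter fun n => MeasurableSet.iInter fun _ =>
    measurableSet_le (measurable_orbit n v) measurable_const

lemma Bd_eq (γ : ℝ) (v : Ed d) : Bd γ v = ⋃ R : ℕ, ⋂ N : ℕ, bnd γ R N v := by
  ext ω
  simp only [Bd, bnd, Set.mem_iUnion, Set.mem_iInter, Set.mem_ofPred_eq]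
  exact exists_congr fun R => ⟨fun h N n _ => h n, fun h n => h n n le_rfl⟩

lemma measurableSet_Bd (γ : ℝ) (v : Ed d) : MeasurableSet (Bd γ v) := by
  rw [Bd_eq]
  exact MeasurableSet.iUnion fun R => MeasurableSet.iInter fun N => measurableSet_bnd _ _ _ _

lemma SS_succ_cons_apply (n : ℕ) (g : GLd d) (ω : Om d) (v : Ed d) :
    glCLM (SS (n + 1) (consO (g, ω))) v = glCLM (SS n ω) (glCLM g v) := by
  rw [SS_succ_cons, glCLM_mul_apply]

lemma SS_zero_apply (ω : Om d) (v : Ed d) : glCLM (SS 0 ω) v = v := by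
  simp [SS, glCLM_one]

lemma cons_mem_Bd {γ : ℝ} {v : Ed d} {g : GLd d} {ω : Om d} :
    consO (g, ω) ∈ Bd γ v ↔ ω ∈ Bd γ (glCLM g v) := by
  rw [mem_Bd, mem_Bd]
  constructor
  · rintro ⟨R, h⟩
    refine ⟨R * Real.exp γ, fun n => ?_⟩
    have := h (n + 1)
    rw [SS_succ_cons_apply] at this
    rw [mul_assoc, ← Real.exp_add]
    convert this using 3
    push_cast; ring
  · rintro ⟨R, h⟩
    refine ⟨max ‖v‖ (R * Real.exp (-γ)), fun n => ?_⟩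
    cases n with
    | zero => rw [SS_zero_apply]; simp
    | succ n =>
      rw [SS_succ_cons_apply]
      have := h n
      calc _ ≤ R * Real.exp (γ * n) := this
        _ = R * Real.exp (-γ) * Real.exp (γ * (n + 1 : ℕ)) := by
            rw [mul_assoc, ← Real.exp_add]; congr 2; push_cast; ring
        _ ≤ _ := by gcongr; exact le_max_right _ _

lemma cons_mem_bnd {γ R : ℝ} {N : ℕ} {v : Ed d} {g : GLd d} {ω : Om d} :
    consO (g, ω) ∈ bnd γ R (N + 1) v ↔ ‖v‖ ≤ R ∧ ω ∈ bnd γ (R * Real.exp γ) N (glCLM g v) := by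
  have key : ∀ n : ℕ, R * Real.exp (γ * (n + 1 : ℕ)) = R * Real.exp γ * Real.exp (γ * n) := by
    intro n
    rw [mul_assoc, ← Real.exp_add]; congr 2; push_cast; ring
  constructor
  · intro h
    refine ⟨by simpa [SS_zero_apply] using h 0 (by omega), fun n hn => ?_⟩
    have := h (n + 1) (by omega)
    rwa [SS_succ_cons_apply, key] at this
  · rintro ⟨h0, h⟩ n hn
    cases n with
    | zero => simpa [SS_zero_apply] using h0
    | succ n =>
      rw [SS_succ_cons_apply, key]
      exact h n (by omega)

lemma Bd_smul {γ : ℝ} {v : Ed d} {ω : Om d} (a : ℝ) (h : ω ∈ Bd γ v) : ω ∈ Bd γ (a • v) := by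
  rw [mem_Bd] at *
  obtain ⟨R, h⟩ := h
  refine ⟨|a| * R, fun n => ?_⟩
  rw [map_smul, norm_smul, Real.norm_eq_abs, mul_assoc]
  exact mul_le_mul_of_nonneg_left (h n) (abs_nonneg _)

lemma Bd_add {γ : ℝ} {v w : Ed d} {ω : Om d} (h : ω ∈ Bd γ v) (h' : ω ∈ Bd γ w) :
    ω ∈ Bd γ (v + w) := by
  rw [mem_Bd] at *
  obtain ⟨R, h⟩ := h
  obtain ⟨R', h'⟩ := h'
  refine ⟨R + R', fun n => ?_⟩
  rw [map_add, add_mul]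
  exact (norm_add_le _ _).trans (add_le_add (h n) (h' n))

lemma Bd_zero {γ : ℝ} {ω : Om d} : ω ∈ Bd γ (0 : Ed d) := by
  rw [mem_Bd]; exact ⟨0, fun n => by simp⟩

section withMeasure
variable (μ : Measure (GLd d)) [IsProbabilityMeasure μ]

lemma measurable_slice {E : Set (Om d)} (hE : MeasurableSet E) :
    Measurable (fun g : GLd d => PP μ {ω | consO (g, ω) ∈ E}) :=
  measurable_measure_prodMk_left (ν := PP μ) (measurable_cons hE)

lemma PP_inter_le {γ : ℝ} {s : ENNReal} (hs : ∀ u : Ed d, u ≠ 0 → PP μ (Bd γ u) ≤ s)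
    (N : ℕ) : ∀ (R : ℝ) (v : Ed d), v ≠ 0 →
      PP μ (Bd γ v ∩ bnd γ R N v) ≤ s * PP μ (bnd γ R N v) := by
  induction N with
  | zero =>
    intro R v hv
    by_cases h : ‖v‖ ≤ R
    · have : bnd γ R 0 v = Set.univ := by
        ext ω
        simp only [bnd, Set.mem_ofPred_eq, Set.mem_univ, iff_true]
        intro n hn
        obtain rfl : n = 0 := by omega
        simpa [SS_zero_apply] using h
      rw [this]
      simpa using hs v hv
    · have : bnd γ R 0 v = ∅ := by
        ext ω
        simp only [bnd, Set.mem_ofPred_eq, Set.mem_empty_iff_false, iff_false]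
        intro h'
        exact h (by simpa [SS_zero_apply] using h' 0 le_rfl)
      rw [this]
      simp
  | succ N ih =>
    intro R v hv
    rw [PP_apply μ ((measurableSet_Bd _ _).inter (measurableSet_bnd _ _ _ _)),
      PP_apply μ (measurableSet_bnd _ _ _ _)]
    rw [← lintegral_const_mul s (measurable_slice μ (measurableSet_bnd _ _ _ _))]
    apply lintegral_mono
    intro g
    simp only [Set.mem_inter_iff, cons_mem_Bd, cons_mem_bnd]
    by_cases h : ‖v‖ ≤ R
    · simp only [h, true_and]
      exact ih _ _ (glCLM_ne_zero g hv)
    · simp [h]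

lemma one_le_of_pos {γ : ℝ} {s : ENNReal} (hs : ∀ u : Ed d, u ≠ 0 → PP μ (Bd γ u) ≤ s)
    {v : Ed d} (hv : v ≠ 0) (hpos : PP μ (Bd γ v) ≠ 0) : 1 ≤ s := by
  obtain ⟨R, hR⟩ : ∃ R : ℕ, PP μ (⋂ N : ℕ, bnd γ R N v) ≠ 0 := by
    by_contra! hcon
    exact hpos (by rw [Bd_eq]; exact measure_iUnion_null hcon)
  set b := PP μ (⋂ N : ℕ, bnd γ R N v) with hb
  have htend : Tendsto (fun N => PP μ (bnd γ R N v)) atTop (nhds b) := by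
    apply tendsto_measure_iInter_atTop
    · exact fun N => (measurableSet_bnd _ _ _ _).nullMeasurableSet
    · intro N M hNM ω h n hn
      exact h n (hn.trans hNM)
    · exact ⟨0, measure_ne_top _ _⟩
  by_contra! hlt
  have h2 : Tendsto (fun N => s * PP μ (bnd γ R N v)) atTop (nhds (s * b)) :=
    ENNReal.Tendsto.const_mul htend (Or.inr hlt.ne_top)
  have h3 : b ≤ s * b := by
    apply ge_of_tendsto' h2
    intro N
    refine le_trans ?_ (PP_inter_le μ hs N R v hv)
    apply measure_mono
    intro ω h
    refine ⟨?_, Set.mem_iInter.1 h N⟩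
    rw [Bd_eq]
    exact Set.mem_iUnion.2 ⟨R, h⟩
  have hbt : b ≠ ⊤ := measure_ne_top _ _
  have h4 : s * b < 1 * b := by
    exact ENNReal.mul_lt_mul_left hR hbt hlt
  rw [one_mul] at h4
  exact absurd h3 (not_le.2 h4)

/-- bad probability of a subspace -/
def cW (γ : ℝ) (W : Submodule ℝ (Ed d)) : ENNReal := PP μ {ω | ∃ w ∈ W, ω ∉ Bd γ w}

lemma cW_sup (γ : ℝ) (W W' : Submodule ℝ (Ed d)) :
    cW μ γ (W ⊔ W') ≤ cW μ γ W + cW μ γ W' := by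
  refine le_trans (measure_mono ?_) (measure_union_le _ _)
  rintro ω ⟨w, hw, hω⟩
  obtain ⟨a, ha, b, hb, rfl⟩ := Submodule.mem_sup.1 hw
  by_contra hcon
  simp only [Set.mem_union, Set.mem_ofPred_eq, not_or, not_exists, not_and, not_not] at hcon
  exact hω (Bd_add (hcon.1 a ha) (hcon.2 b hb))

lemma cW_span (γ : ℝ) (v : Ed d) : cW μ γ (ℝ ∙ v) = PP μ (Bd γ v)ᶜ := by
  unfold cW
  congr 1
  ext ω
  simp only [Set.mem_ofPred_eq, Set.mem_compl_iff]
  constructor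
  · rintro ⟨w, hw, hω⟩ hv
    obtain ⟨a, rfl⟩ := Submodule.mem_span_singleton.1 hw
    exact hω (Bd_smul a hv)
  · intro h
    exact ⟨v, Submodule.mem_span_singleton_self v, h⟩

lemma exists_full (γ : ℝ) (k : ℕ) : ∀ r : ℕ, 1 ≤ r → r + k = d + 1 →
    (∀ ε : ENNReal, 0 < ε → ∃ W : Submodule ℝ (Ed d), r ≤ Module.finrank ℝ W ∧ cW μ γ W < ε) →
    ∃ W : Submodule ℝ (Ed d), W ≠ ⊥ ∧ cW μ γ W = 0 := by
  induction k with
  | zero =>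
    intro r _ hr h
    obtain ⟨W, hW, -⟩ := h 1 one_pos
    have := Submodule.finrank_le W
    rw [finrank_euclideanSpace_fin] at this
    omega
  | succ k ih =>
    intro r hr1 hr h
    by_cases hP : ∀ ε : ENNReal, 0 < ε →
        ∃ W : Submodule ℝ (Ed d), r + 1 ≤ Module.finrank ℝ W ∧ cW μ γ W < ε
    · exact ih (r + 1) (by omega) (by omega) hP
    push Not at hP
    obtain ⟨ε, hε, hP⟩ := hP
    have hε2 : 0 < ε / 2 := ENNReal.half_pos hε.ne'
    obtain ⟨W, hW, hWε⟩ := h (ε / 2) hε2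
    refine ⟨W, ?_, ?_⟩
    · rintro rfl
      simp at hW
      omega
    · by_contra hne
      obtain ⟨W', hW', hWε'⟩ := h (min (ε / 2) (cW μ γ W)) (lt_min hε2 (pos_iff_ne_zero.2 hne))
      have hlt : cW μ γ (W ⊔ W') < ε := by
        calc _ ≤ cW μ γ W + cW μ γ W' := cW_sup μ γ W W'
          _ < ε / 2 + ε / 2 := ENNReal.add_lt_add hWε (hWε'.trans_le (min_le_left _ _))
          _ = ε := ENNReal.add_halves ε
      have hfr : Module.finrank ℝ ↥(W ⊔ W') < r + 1 := by
        by_contra! hcon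
        exact absurd (hP _ hcon) (not_le.2 hlt)
      have e1 : W = W ⊔ W' := Submodule.eq_of_le_of_finrank_le le_sup_left (by omega)
      have e2 : W' = W ⊔ W' := Submodule.eq_of_le_of_finrank_le le_sup_right (by omega)
      have e3 : W = W' := e1.trans e2.symm
      rw [← e3] at hWε'
      exact absurd hWε' (not_lt.2 (min_le_right _ _))

/-- subspace of a.s. slowly growing vectors -/
def VV (γ : ℝ) : Submodule ℝ (Ed d) where
  carrier := {v | PP μ (Bd γ v)ᶜ = 0}
  zero_mem' := by
    have : (Bd γ (0 : Ed d))ᶜ = ∅ := by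
      ext ω; simp [Bd_zero]
    simp [this]
  add_mem' := by
    intro a b ha hb
    have ha' : ∀ᵐ ω ∂(PP μ), ω ∈ Bd γ a := ha
    have hb' : ∀ᵐ ω ∂(PP μ), ω ∈ Bd γ b := hb
    change ∀ᵐ ω ∂(PP μ), ω ∈ Bd γ (a + b)
    filter_upwards [ha', hb'] with ω h1 h2
    exact Bd_add h1 h2
  smul_mem' := by
    intro a b hb
    have hb' : ∀ᵐ ω ∂(PP μ), ω ∈ Bd γ b := hb
    change ∀ᵐ ω ∂(PP μ), ω ∈ Bd γ (a • b)
    filter_upwards [hb'] with ω h2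
    exact Bd_smul a h2

lemma mem_VV {γ : ℝ} {v : Ed d} : v ∈ VV μ γ ↔ PP μ (Bd γ v)ᶜ = 0 := Iff.rfl

lemma VV_ne_bot {γ : ℝ} {v : Ed d} (hv : v ≠ 0) (hpos : PP μ (Bd γ v) ≠ 0) :
    VV μ γ ≠ ⊥ := by
  have hd : 1 ≤ d := by
    by_contra! h
    obtain rfl : d = 0 := by omega
    exact hv (Subsingleton.elim _ _)
  obtain ⟨W, hW, hW0⟩ := exists_full μ γ d 1 le_rfl (by omega) (by
    intro ε hε
    by_contra! hcon
    have : 1 ≤ 1 - min ε 1 := by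
      apply one_le_of_pos μ (γ := γ) _ hv hpos
      intro u hu
      have h1 := hcon (ℝ ∙ u) (by rw [finrank_span_singleton hu])
      rw [cW_span, prob_compl_eq_one_sub (measurableSet_Bd _ _)] at h1
      apply ENNReal.le_sub_of_add_le_left (by simp)
      calc min ε 1 + PP μ (Bd γ u) ≤ (1 - PP μ (Bd γ u)) + PP μ (Bd γ u) := by
            gcongr; exact (min_le_left _ _).trans h1
        _ = 1 := tsub_add_cancel_of_le prob_le_one
    have h2 : 1 - min ε 1 < 1 := ENNReal.sub_lt_self (by simp) (by simp) (by simp [hε.ne'])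
    exact absurd this (not_le.2 h2))
  obtain ⟨w, hw, hw0⟩ := Submodule.exists_mem_ne_zero_of_ne_bot hW
  intro hbot
  have : w ∈ VV μ γ := by
    rw [mem_VV]
    refine measure_mono_null ?_ hW0
    intro ω hω
    exact ⟨w, hw, hω⟩
  rw [hbot, Submodule.mem_bot] at this
  exact hw0 this

lemma VV_map_le (γ : ℝ) : ∀ᵐ g ∂μ, (VV μ γ).map (glCLM g).toLinearMap ≤ VV μ γ := by
  obtain ⟨s, hs⟩ := (IsNoetherian.noetherian (VV μ γ) : (VV μ γ).FG)
  have h1 : ∀ v ∈ s, ∀ᵐ g ∂μ, glCLM g v ∈ VV μ γ := by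
    intro v hv
    have hvV : v ∈ VV μ γ := by rw [← hs]; exact Submodule.subset_span hv
    rw [mem_VV, PP_apply μ (measurableSet_Bd _ _).compl] at hvV
    simp only [Set.mem_compl_iff, cons_mem_Bd] at hvV
    rw [lintegral_eq_zero_iff'] at hvV
    · filter_upwards [hvV] with g hg
      exact hg
    · have := measurable_measure_prodMk_left (ν := PP μ)
        (measurable_cons (measurableSet_Bd γ v).compl)
      have e : (fun g : GLd d => PP μ {ω | ω ∉ Bd γ (glCLM g v)}) =
        fun g => PP μ (Prod.mk g ⁻¹' (consO ⁻¹' (Bd γ v)ᶜ)) := by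
        ext g
        congr 1
        ext ω
        simp [cons_mem_Bd]
      rw [e]
      exact this.aemeasurable
  have h2 : ∀ᵐ g ∂μ, ∀ v ∈ s, glCLM g v ∈ VV μ γ := (ae_ball_iff s.countable_toSet).2 h1
  filter_upwards [h2] with g hg
  conv_lhs => rw [← hs]
  rw [Submodule.map_span, Submodule.span_le]
  rintro _ ⟨v, hv, rfl⟩
  exact hg v hv

lemma map_eq_of_le {V : Submodule ℝ (Ed d)} {g : GLd d}
    (h : V.map (glCLM g).toLinearMap ≤ V) : V.map (glCLM g).toLinearMap = V := by
  apply Submodule.eq_of_le_of_finrank_eq h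
  exact (Submodule.equivMapOfInjective _ (glLinear_injective g) V).finrank_eq.symm

end withMeasure

/-- restricted norm -/
def rnorm (V : Submodule ℝ (Ed d)) (g : GLd d) : ℝ :=
  ‖LinearMap.toContinuousLinearMap ((glCLM g).toLinearMap.domRestrict V)‖

lemma rnorm_eq (V : Submodule ℝ (Ed d)) (g : GLd d) :
    rnorm V g = ‖(glCLM g).comp V.subtypeL‖ := by
  unfold rnorm; congr 1

lemma continuous_rnorm (V : Submodule ℝ (Ed d)) : Continuous (rnorm V) := by
  have : rnorm V = fun g => ‖(glCLM g).comp V.subtypeL‖ := funext (rnorm_eq V)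
  rw [this]
  exact (continuous_glCLM.clm_comp continuous_const).norm

lemma rnorm_nonneg (V : Submodule ℝ (Ed d)) (g : GLd d) : 0 ≤ rnorm V g := by
  rw [rnorm_eq]; exact norm_nonneg ((glCLM g).comp V.subtypeL)

lemma le_rnorm (V : Submodule ℝ (Ed d)) (g : GLd d) {v : Ed d} (hv : v ∈ V) :
    ‖glCLM g v‖ ≤ rnorm V g * ‖v‖ := by
  rw [rnorm_eq]
  exact ((glCLM g).comp V.subtypeL).le_opNorm ⟨v, hv⟩

lemma rnorm_le (V : Submodule ℝ (Ed d)) (g : GLd d) {C : ℝ} (hC : 0 ≤ C)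
    (h : ∀ v ∈ V, ‖glCLM g v‖ ≤ C * ‖v‖) : rnorm V g ≤ C := by
  rw [rnorm_eq]
  exact ContinuousLinearMap.opNorm_le_bound _ hC (fun v => h v v.2)

lemma rnorm_top (g : GLd d) : rnorm ⊤ g = gnorm g := by
  apply le_antisymm
  · exact rnorm_le _ _ (gnorm_nonneg g) (fun v _ => (glCLM g).le_opNorm v)
  · exact ContinuousLinearMap.opNorm_le_bound _ (rnorm_nonneg _ _)
      (fun v => le_rnorm ⊤ g Submodule.mem_top)

lemma L1rest_top (μ : Measure (GLd d)) : L1rest μ ⊤ = L1 μ := by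
  unfold L1rest L1
  congr 1
  ext n
  congr 1
  apply integral_congr_ae
  exact Eventually.of_forall fun g => congrArg Real.log (rnorm_top g)

lemma NB.log_rnorm {V : Submodule ℝ (Ed d)} (hV : V ≠ ⊥) {a : ℝ} {g : GLd d} (hg : NB a g) :
    0 < rnorm V g ∧ |Real.log (rnorm V g)| ≤ a := by
  obtain ⟨w, hw, hw0⟩ := Submodule.exists_mem_ne_zero_of_ne_bot hV
  have hw' : 0 < ‖w‖ := norm_pos_iff.2 hw0
  have h1 : Real.exp (-a) ≤ rnorm V g :=
    le_of_mul_le_mul_right ((hg.ge w).trans (le_rnorm V g hw)) hw'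
  have h2 : rnorm V g ≤ Real.exp a := rnorm_le _ _ (Real.exp_pos _).le (fun v _ => hg.le v)
  have h0 : 0 < rnorm V g := (Real.exp_pos _).trans_le h1
  refine ⟨h0, abs_le.2 ⟨?_, ?_⟩⟩
  · simpa using Real.log_le_log (Real.exp_pos _) h1
  · simpa using Real.log_le_log h0 h2

lemma rnorm_pos {V : Submodule ℝ (Ed d)} (hV : V ≠ ⊥) (g : GLd d) : 0 < rnorm V g := by
  obtain ⟨w, hw, hw0⟩ := Submodule.exists_mem_ne_zero_of_ne_bot hV
  have := (norm_pos_iff.2 (glCLM_ne_zero g hw0)).trans_le (le_rnorm V g hw)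
  exact pos_of_mul_pos_left this (norm_nonneg _)

/-- stabilizer submonoid -/
def stabV (V : Submodule ℝ (Ed d)) : Submonoid (GLd d) where
  carrier := {g | ∀ v ∈ V, glCLM g v ∈ V}
  one_mem' := by intro v hv; rw [glCLM_one]; exact hv
  mul_mem' := by
    intro g h hg hh v hv
    rw [glCLM_mul_apply]
    exact hg _ (hh v hv)

section withMeasure
variable (μ : Measure (GLd d)) [IsProbabilityMeasure μ]

lemma tendsto_L1rest {c : ℝ} (hNB : μ {g | NB c g}ᶜ = 0) {V : Submodule ℝ (Ed d)} (hV : V ≠ ⊥)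
    (hinv : ∀ᵐ g ∂μ, V.map (glCLM g).toLinearMap ≤ V) :
    Tendsto (fun n : ℕ => (n : ℝ)⁻¹ * ∫ g, Real.log (rnorm V g) ∂(mconvN μ n)) atTop
      (nhds (L1rest μ V)) := by
  apply exists_lim μ hNB (stabV V) (C := 1)
  · change ∀ᵐ g ∂μ, g ∈ stabV V
    filter_upwards [hinv] with g hg v hv
    exact hg (Submodule.mem_map_of_mem hv)
  · exact (continuous_rnorm V).measurable.log
  · intro g _ a ha
    rw [one_mul]
    exact (ha.log_rnorm hV).2
  · intro g _ h hh
    rw [← Real.log_mul (rnorm_pos hV g).ne' (rnorm_pos hV h).ne']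
    apply Real.log_le_log (rnorm_pos hV _)
    apply rnorm_le _ _ (mul_nonneg (rnorm_nonneg _ _) (rnorm_nonneg _ _))
    intro v hv
    rw [glCLM_mul_apply]
    calc _ ≤ rnorm V g * ‖glCLM h v‖ := le_rnorm V g (hh v hv)
      _ ≤ rnorm V g * (rnorm V h * ‖v‖) :=
        mul_le_mul_of_nonneg_left (le_rnorm V h hv) (rnorm_nonneg _ _)
      _ = _ := by ring

lemma ae_bdd_VV (γ : ℝ) : ∀ᵐ ω ∂(PP μ), ∃ R : ℝ, 1 ≤ R ∧
    ∀ n : ℕ, rnorm (VV μ γ) (SS n ω) ≤ R * Real.exp (γ * n) := by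
  set b := stdOrthonormalBasis ℝ (VV μ γ) with hb
  have h1 : ∀ᵐ ω ∂(PP μ), ∀ i, ω ∈ Bd γ (b i : Ed d) := by
    rw [ae_all_iff]
    intro i
    exact (b i).2
  filter_upwards [h1] with ω hω
  choose R hR using fun i => mem_Bd.1 (hω i)
  refine ⟨max 1 (∑ i, R i), le_max_left _ _, fun n => ?_⟩
  apply rnorm_le _ _ (by positivity)
  intro v hv
  have e : v = ∑ i, (inner ℝ (b i) (⟨v, hv⟩ : VV μ γ) : ℝ) • (b i : Ed d) := by
    have := congrArg (Subtype.val) (b.sum_repr' ⟨v, hv⟩)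
    simpa using this.symm
  have hle : ∀ i, |(inner ℝ (b i) (⟨v, hv⟩ : VV μ γ) : ℝ)| ≤ ‖v‖ := by
    intro i
    have := abs_real_inner_le_norm (b i) (⟨v, hv⟩ : VV μ γ)
    rw [b.norm_eq_one, one_mul] at this
    exact this
  calc ‖glCLM (SS n ω) v‖ = ‖∑ i, (inner ℝ (b i) (⟨v, hv⟩ : VV μ γ) : ℝ) •
          glCLM (SS n ω) (b i : Ed d)‖ := by
        conv_lhs => rw [e]
        simp [map_sum, map_smul]
    _ ≤ ∑ i, ‖(inner ℝ (b i) (⟨v, hv⟩ : VV μ γ) : ℝ) • glCLM (SS n ω) (b i : Ed d)‖ :=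
        norm_sum_le _ _
    _ ≤ ∑ i, ‖v‖ * (R i * Real.exp (γ * n)) := by
        apply Finset.sum_le_sum
        intro i _
        rw [norm_smul, Real.norm_eq_abs]
        exact mul_le_mul (hle i) (hR i n) (norm_nonneg _) (norm_nonneg _)
    _ = (∑ i, R i) * Real.exp (γ * n) * ‖v‖ := by
        rw [Finset.sum_mul, Finset.sum_mul]
        exact Finset.sum_congr rfl fun i _ => by ring
    _ ≤ _ := by gcongr; exact le_max_right _ _

lemma L1rest_VV_le {c : ℝ} (hNB : μ {g | NB c g}ᶜ = 0) {γ : ℝ} (hV : VV μ γ ≠ ⊥) :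
    L1rest μ (VV μ γ) ≤ γ := by
  set V := VV μ γ with hVdef
  have ht := tendsto_L1rest μ hNB hV (VV_map_le μ γ)
  have hm : Measurable (fun g => Real.log (rnorm V g)) := (continuous_rnorm V).measurable.log
  have hbd : ∀ n : ℕ, ∀ᵐ ω ∂(PP μ), |Real.log (rnorm V (SS n ω))| ≤ c * n := by
    intro n
    filter_upwards [ae_all μ hNB] with ω h1
    exact ((SS_NB n h1).log_rnorm hV).2
  set X : ℕ → Om d → ℝ := fun n ω => max ((n : ℝ)⁻¹ * Real.log (rnorm V (SS n ω))) γ with hX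
  have hXm : ∀ n, AEStronglyMeasurable (X n) (PP μ) := fun n =>
    (((hm.comp (measurable_SS n)).const_mul _).max measurable_const).aestronglyMeasurable
  have hXb : ∀ n, ∀ᵐ ω ∂(PP μ), ‖X n ω‖ ≤ |c| + |γ| := by
    intro n
    filter_upwards [hbd n] with ω h
    have h1 : |(n : ℝ)⁻¹ * Real.log (rnorm V (SS n ω))| ≤ |c| := by
      rw [abs_mul, abs_inv, Nat.abs_cast]
      rcases Nat.eq_zero_or_pos n with rfl | hn
      · simp
      · have hn' : (0 : ℝ) < n := by exact_mod_cast hn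
        rw [inv_mul_le_iff₀ hn', mul_comm]
        exact h.trans (mul_le_mul_of_nonneg_right (le_abs_self c) hn'.le)
    rw [Real.norm_eq_abs]
    refine (abs_max_le_max_abs_abs).trans (max_le ?_ ?_)
    · linarith [abs_nonneg γ]
    · linarith [abs_nonneg c]
  have hlim : ∀ᵐ ω ∂(PP μ), Tendsto (fun n => X n ω) atTop (nhds γ) := by
    filter_upwards [ae_bdd_VV μ γ] with ω ⟨R, hR1, hR⟩
    have hup : Tendsto (fun n : ℕ => γ + (n : ℝ)⁻¹ * Real.log R) atTop (nhds γ) := by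
      have := (tendsto_inv_atTop_nhds_zero_nat (𝕜 := ℝ)).mul_const (Real.log R)
      simpa using this.const_add γ
    refine tendsto_of_tendsto_of_tendsto_of_le_of_le' tendsto_const_nhds hup ?_ ?_
    · exact Eventually.of_forall fun n => le_max_right _ _
    · filter_upwards [eventually_gt_atTop 0] with n hn
      have hn' : (0 : ℝ) < n := by exact_mod_cast hn
      have hlog : 0 ≤ Real.log R := Real.log_nonneg hR1
      apply max_le
      · have := Real.log_le_log (rnorm_pos hV _) (hR n)
        rw [Real.log_mul (by linarith) (Real.exp_pos _).ne', Real.log_exp] at this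
        rw [inv_mul_le_iff₀ hn']
        calc _ ≤ _ := this
          _ = _ := by field_simp; ring
      · have : 0 ≤ (n : ℝ)⁻¹ * Real.log R := by positivity
        linarith
  have hdc := tendsto_integral_of_dominated_convergence (fun _ => |c| + |γ|) hXm
    (integrable_const _) hXb hlim
  rw [integral_const] at hdc
  simp only [probReal_univ, one_smul] at hdc
  apply le_of_tendsto_of_tendsto' ht hdc
  intro n
  rw [integral_mconvN μ n hm, ← integral_const_mul]
  apply integral_mono
  · exact (integrable_of_bound μ hm n (hbd n)).const_mul _
  · exact Integrable.of_bound (hXm n) _ (hXb n)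
  · intro ω
    exact le_max_left _ _

theorem no_slow {c : ℝ} (hNB : μ {g | NB c g}ᶜ = 0) (hqi : QuasiIrreducible μ) {γ : ℝ}
    (hγ : γ < L1 μ) {v : Ed d} (hv : v ≠ 0) : PP μ (Bd γ v) = 0 := by
  by_contra hpos
  have hV := VV_ne_bot μ hv hpos
  have hle := L1rest_VV_le μ hNB hV
  by_cases htop : VV μ γ = ⊤
  · rw [htop, L1rest_top] at hle
    linarith
  · apply hqi
    refine ⟨VV μ γ, hV, htop, ?_, by linarith⟩
    filter_upwards [VV_map_le μ γ] with g hg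
    exact map_eq_of_le hg

end withMeasure

open Classical in
/-- Pathwise tiling lemma. -/
lemma tiling (x : ℕ → ℝ) (κ : ℝ) (hκ : 0 ≤ κ) (N : ℕ) (hx : ∀ j, |x (j + 1) - x j| ≤ κ)
    (k : ℕ) : ∀ m : ℕ, -κ * (∑ j ∈ Finset.Ico m (m + k),
      if (∀ i ≤ N, x (j + i) ≤ x j) then (1 : ℝ) else 0) - κ * N ≤ x (m + k) - x m := by
  have htriv : ∀ m i, -κ * i ≤ x (m + i) - x m := by
    intro m i
    induction i with
    | zero => simp
    | succ i ih =>
      have := (abs_le.1 (hx (m + i))).1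
      rw [← add_assoc]
      push_cast
      linarith
  have hnn : ∀ a b, 0 ≤ ∑ j ∈ Finset.Ico a b, if (∀ i ≤ N, x (j + i) ≤ x j) then (1 : ℝ) else 0 := by
    intro a b
    exact Finset.sum_nonneg fun j _ => by split_ifs <;> norm_num
  induction k using Nat.strong_induction_on with
  | _ k ih =>
    intro m
    by_cases hk : k ≤ N
    · have h1 := htriv m k
      have h2 := mul_nonneg hκ (hnn m (m + k))
      have h3 : κ * k ≤ κ * N := by gcongr
      linarith
    push Not at hk
    by_cases hbad : ∀ i ≤ N, x (m + i) ≤ x m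
    · obtain ⟨k', rfl⟩ : ∃ k', k = k' + 1 := ⟨k - 1, by omega⟩
      have h1 := ih k' (by omega) (m + 1)
      rw [Finset.sum_eq_sum_Ico_succ_bot (by omega), if_pos hbad]
      have e : m + 1 + k' = m + (k' + 1) := by omega
      rw [e] at h1
      have := (abs_le.1 (hx m)).1
      linarith
    · push Not at hbad
      obtain ⟨i, hi, hgt⟩ := hbad
      have hi0 : i ≠ 0 := by rintro rfl; simp at hgt
      have h1 := ih (k - i) (by omega) (m + i)
      have e : m + i + (k - i) = m + k := by omega
      rw [e] at h1
      rw [← Finset.sum_Ico_consecutive _ (show m ≤ m + i by omega) (show m + i ≤ m + k by omega)]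
      have h2 := mul_nonneg hκ (hnn m (m + i))
      linarith

/-- bad at time `j` -/
def badj (γ : ℝ) (N j : ℕ) (v : Ed d) : Set (Om d) :=
  {ω | ∀ k : ℕ, k ≤ N → ‖glCLM (SS (k + j) ω) v‖ ≤ ‖glCLM (SS j ω) v‖ * Real.exp (γ * k)}

lemma measurableSet_badj (γ : ℝ) (N j : ℕ) (v : Ed d) : MeasurableSet (badj γ N j v) := by
  have : badj γ N j v = ⋂ (k : ℕ) (_ : k ≤ N),
      {ω | ‖glCLM (SS (k + j) ω) v‖ ≤ ‖glCLM (SS j ω) v‖ * Real.exp (γ * k)} := by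
    ext ω; simp [badj]
  rw [this]
  exact MeasurableSet.iInter fun n => MeasurableSet.iInter fun _ =>
    measurableSet_le (measurable_orbit _ v) ((measurable_orbit _ v).mul_const _)

lemma badj_zero (γ : ℝ) (N : ℕ) (v : Ed d) : badj γ N 0 v = bnd γ ‖v‖ N v := by
  ext ω; simp [badj, bnd, SS_zero_apply]

lemma cons_mem_badj {γ : ℝ} {N j : ℕ} {v : Ed d} {g : GLd d} {ω : Om d} :
    consO (g, ω) ∈ badj γ N (j + 1) v ↔ ω ∈ badj γ N j (glCLM g v) := by
  simp only [badj, Set.mem_ofPred_eq, ← add_assoc, SS_succ_cons_apply]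

section withMeasure
variable (μ : Measure (GLd d)) [IsProbabilityMeasure μ]

lemma PP_badj_le {γ : ℝ} {N : ℕ} {ε : ENNReal}
    (h : ∀ v : Ed d, v ≠ 0 → PP μ (bnd γ ‖v‖ N v) ≤ ε) (j : ℕ) :
    ∀ v : Ed d, v ≠ 0 → PP μ (badj γ N j v) ≤ ε := by
  induction j with
  | zero => intro v hv; rw [badj_zero]; exact h v hv
  | succ j ih =>
    intro v hv
    rw [PP_apply μ (measurableSet_badj _ _ _ _)]
    simp only [cons_mem_badj]
    calc _ ≤ ∫⁻ _, ε ∂μ := lintegral_mono fun g => ih _ (glCLM_ne_zero g hv)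
      _ = ε := by simp

lemma bnd_normalize (γ : ℝ) (N : ℕ) {v : Ed d} (hv : v ≠ 0) :
    bnd γ ‖v‖ N v = bnd γ 1 N (‖v‖⁻¹ • v) := by
  have hv' : 0 < ‖v‖ := norm_pos_iff.2 hv
  ext ω
  simp only [bnd, Set.mem_ofPred_eq, map_smul, norm_smul, norm_inv, norm_norm, one_mul]
  refine forall_congr' fun n => forall_congr' fun _ => ?_
  rw [inv_mul_le_iff₀ hv']

lemma bnd_anti {γ R : ℝ} {N M : ℕ} (h : N ≤ M) (v : Ed d) : bnd γ R M v ⊆ bnd γ R N v :=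
  fun _ hω n hn => hω n (hn.trans h)

lemma unif_bad {c : ℝ} (hc : 0 < c) (hNB : μ {g | NB c g}ᶜ = 0) {γ : ℝ}
    (hB : ∀ v : Ed d, v ≠ 0 → PP μ (Bd γ v) = 0) {ε : ENNReal} (hε : 0 < ε) :
    ∃ N : ℕ, ∀ v : Ed d, v ≠ 0 → PP μ (bnd γ ‖v‖ N v) ≤ ε := by
  have key : ∃ N : ℕ, ∀ v ∈ Metric.sphere (0 : Ed d) 1, PP μ (bnd γ 1 N v) ≤ ε := by
    refine (isCompact_sphere (0 : Ed d) 1).induction_on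
      (p := fun s => ∃ N : ℕ, ∀ v ∈ s, PP μ (bnd γ 1 N v) ≤ ε) ⟨0, by simp⟩ ?_ ?_ ?_
    · rintro s t hst ⟨N, hN⟩
      exact ⟨N, fun v hv => hN v (hst hv)⟩
    · rintro s t ⟨N, hN⟩ ⟨M, hM⟩
      refine ⟨max N M, fun v hv => ?_⟩
      rcases hv with hv | hv
      · exact (measure_mono (bnd_anti (le_max_left _ _) v)).trans (hN v hv)
      · exact (measure_mono (bnd_anti (le_max_right _ _) v)).trans (hM v hv)
    · intro v hv
      have hv0 : v ≠ 0 := by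
        rintro rfl; simp at hv
      have htend : Tendsto (fun N => PP μ (bnd γ (2 : ℕ) N v)) atTop
          (nhds (PP μ (⋂ N : ℕ, bnd γ (2 : ℕ) N v))) := by
        apply tendsto_measure_iInter_atTop
        · exact fun N => (measurableSet_bnd _ _ _ _).nullMeasurableSet
        · intro N M hNM
          exact bnd_anti hNM v
        · exact ⟨0, measure_ne_top _ _⟩
      have hz : PP μ (⋂ N : ℕ, bnd γ (2 : ℕ) N v) = 0 := by
        refine measure_mono_null ?_ (hB v hv0)
        rw [Bd_eq]
        exact Set.subset_iUnion (fun R : ℕ => ⋂ N : ℕ, bnd γ R N v) 2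
      rw [hz] at htend
      obtain ⟨N, hN⟩ := ((tendsto_order.1 htend).2 ε hε).exists
      refine ⟨Metric.ball v (Real.exp (-(c + |γ|) * N)), ?_, N, ?_⟩
      · exact mem_nhdsWithin_of_mem_nhds (Metric.ball_mem_nhds _ (Real.exp_pos _))
      · intro w hw
        refine le_trans ?_ hN.le
        apply measure_mono_ae
        filter_upwards [ae_all μ hNB] with ω hω hmem n hn
        have h1 : ‖glCLM (SS n ω) w‖ ≤ 1 * Real.exp (γ * n) := hmem n hn
        have h2 := (SS_NB n hω).le (v - w)
        have h3 : ‖v - w‖ ≤ Real.exp (-(c + |γ|) * N) := by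
          rw [← dist_eq_norm, dist_comm]; exact (Metric.mem_ball.1 hw).le
        have h4 : Real.exp (c * n) * Real.exp (-(c + |γ|) * N) ≤ Real.exp (γ * n) := by
          rw [← Real.exp_add, Real.exp_le_exp]
          have hn' : (n : ℝ) ≤ N := by exact_mod_cast hn
          have := neg_abs_le γ
          have h5 : (c + |γ|) * n ≤ (c + |γ|) * N := by gcongr
          have h6 : -|γ| * n ≤ γ * n := by gcongr
          linarith
        have e : glCLM (SS n ω) v = glCLM (SS n ω) w + glCLM (SS n ω) (v - w) := by
          rw [← map_add]; congr 1; abel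
        rw [e]
        have h5 : Real.exp (c * n) * ‖v - w‖ ≤ Real.exp (c * n) * Real.exp (-(c + |γ|) * N) := by
          gcongr
        have := norm_add_le (glCLM (SS n ω) w) (glCLM (SS n ω) (v - w))
        push_cast
        linarith
  obtain ⟨N, hN⟩ := key
  refine ⟨N, fun v hv => ?_⟩
  rw [bnd_normalize γ N hv]
  apply hN
  have hv' : 0 < ‖v‖ := norm_pos_iff.2 hv
  simp [norm_smul, hv'.ne']

lemma SS_succ' (j : ℕ) (ω : Om d) : SS (j + 1) ω = ω j * SS j ω := by
  rw [add_comm, SS_add]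
  congr 1
  simp only [SS, one_mul]
  rw [shO_iter]; simp

lemma measurable_logorbit (v : Ed d) :
    Measurable (fun g : GLd d => Real.log ‖glCLM g v‖ - Real.log ‖v‖) :=
  ((continuous_glCLM_apply v).norm.measurable.log).sub_const _

lemma ae_logorbit {c : ℝ} (hNB : μ {g | NB c g}ᶜ = 0) (n : ℕ) {v : Ed d} (hv : v ≠ 0) :
    ∀ᵐ ω ∂(PP μ), |Real.log ‖glCLM (SS n ω) v‖ - Real.log ‖v‖| ≤ c * n := by
  filter_upwards [ae_all μ hNB] with ω hω
  exact (SS_NB n hω).log_le hv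

lemma lower_aux {c : ℝ} (hc : 0 < c) (hNB : μ {g | NB c g}ᶜ = 0) {γ ε : ℝ} (hε : 0 < ε) {N : ℕ}
    (h : ∀ v : Ed d, v ≠ 0 → PP μ (bnd γ ‖v‖ N v) ≤ ENNReal.ofReal ε)
    {v : Ed d} (hv : v ≠ 0) (n : ℕ) :
    γ * n - (c + |γ|) * (n * ε) - (c + |γ|) * N ≤
      ∫ ω, (Real.log ‖glCLM (SS n ω) v‖ - Real.log ‖v‖) ∂(PP μ) := by
  classical
  have hind : ∀ j, Integrable ((badj γ N j v).indicator (fun _ => (1 : ℝ))) (PP μ) := fun j =>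
    (integrable_const _).indicator (measurableSet_badj _ _ _ _)
  have hprob : ∀ j, ∫ ω, (badj γ N j v).indicator (fun _ => (1 : ℝ)) ω ∂(PP μ) ≤ ε := by
    intro j
    rw [integral_indicator (measurableSet_badj _ _ _ _)]
    simp only [integral_const, smul_eq_mul, mul_one, measureReal_restrict_apply_univ]
    exact ENNReal.toReal_le_of_le_ofReal hε.le (PP_badj_le μ h j v hv)
  have hpath : ∀ᵐ ω ∂(PP μ), γ * n - (c + |γ|) * (∑ j ∈ Finset.range n,
      (badj γ N j v).indicator (fun _ => (1 : ℝ)) ω) - (c + |γ|) * N ≤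
      Real.log ‖glCLM (SS n ω) v‖ - Real.log ‖v‖ := by
    filter_upwards [ae_all μ hNB] with ω hω
    set x : ℕ → ℝ := fun j => Real.log ‖glCLM (SS j ω) v‖ - γ * j with hx
    have hnz : ∀ j, glCLM (SS j ω) v ≠ 0 := fun j => glCLM_ne_zero _ hv
    have hstep : ∀ j, |x (j + 1) - x j| ≤ c + |γ| := by
      intro j
      have h1 := NB.log_le (hω j) (hnz j)
      rw [← glCLM_mul_apply, ← SS_succ'] at h1
      have : x (j + 1) - x j = (Real.log ‖glCLM (SS (j + 1) ω) v‖ -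
        Real.log ‖glCLM (SS j ω) v‖) + (-γ) := by simp only [hx]; push_cast; ring
      rw [this]
      refine (abs_add_le _ _).trans ?_
      rw [abs_neg]
      linarith
    have ht := tiling x (c + |γ|) (by positivity) N hstep n 0
    have hcond : ∀ j, (if (∀ i ≤ N, x (j + i) ≤ x j) then (1 : ℝ) else 0) =
        (badj γ N j v).indicator (fun _ => (1 : ℝ)) ω := by
      intro j
      rw [Set.indicator_apply]
      refine if_congr ?_ rfl rfl
      change _ ↔ ∀ k : ℕ, k ≤ N → ‖glCLM (SS (k + j) ω) v‖ ≤ ‖glCLM (SS j ω) v‖ * Real.exp (γ * k)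
      refine forall_congr' fun i => forall_congr' fun _ => ?_
      rw [← Real.log_le_log_iff (norm_pos_iff.2 (hnz _))
        (mul_pos (norm_pos_iff.2 (hnz _)) (Real.exp_pos _)),
        Real.log_mul (norm_pos_iff.2 (hnz _)).ne' (Real.exp_pos _).ne', Real.log_exp]
      simp only [hx]
      rw [add_comm j i]
      push_cast
      constructor <;> intro h <;> linarith
    simp only [hcond, zero_add, Nat.Ico_zero_eq_range] at ht
    have e0 : x 0 = Real.log ‖v‖ := by simp [hx, SS_zero_apply]
    have en : x n = Real.log ‖glCLM (SS n ω) v‖ - γ * n := rfl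
    rw [e0, en] at ht
    linarith
  have hsumint : Integrable (fun ω => ∑ j ∈ Finset.range n,
      (badj γ N j v).indicator (fun _ => (1 : ℝ)) ω) (PP μ) :=
    integrable_finsetSum _ fun j _ => hind j
  have hint2 : Integrable (fun ω => γ * n - (c + |γ|) * (∑ j ∈ Finset.range n,
      (badj γ N j v).indicator (fun _ => (1 : ℝ)) ω) - (c + |γ|) * N) (PP μ) :=
    ((integrable_const _).sub (hsumint.const_mul _)).sub (integrable_const _)
  refine le_trans ?_ (integral_mono_ae hint2
    (integrable_of_bound μ (measurable_logorbit v) n (ae_logorbit μ hNB n hv)) hpath)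
  have hint1 : Integrable (fun ω => γ * n - (c + |γ|) * (∑ j ∈ Finset.range n,
      (badj γ N j v).indicator (fun _ => (1 : ℝ)) ω)) (PP μ) :=
    (integrable_const _).sub (hsumint.const_mul _)
  rw [integral_sub hint1 (integrable_const _),
    integral_sub (integrable_const _) (hsumint.const_mul _), integral_const_mul (c + |γ|),
    integral_finsetSum _ fun j _ => hind j]
  simp only [integral_const, probReal_univ, smul_eq_mul, one_mul]
  have : ∑ j ∈ Finset.range n, ∫ ω, (badj γ N j v).indicator (fun _ => (1 : ℝ)) ω ∂(PP μ) ≤ n * ε := by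
    calc _ ≤ ∑ j ∈ Finset.range n, ε := Finset.sum_le_sum fun j _ => hprob j
      _ = n * ε := by simp
  have hk : 0 ≤ c + |γ| := by positivity
  have := mul_le_mul_of_nonneg_left this hk
  linarith

theorem uniform_growth {c : ℝ} (hc : 0 < c) (hNB : μ {g | NB c g}ᶜ = 0)
    (hqi : QuasiIrreducible μ) {γ' : ℝ} (hγ' : γ' < L1 μ) :
    ∃ n₁ : ℕ, ∀ n ≥ n₁, ∀ v : Ed d, v ≠ 0 →
      γ' * n ≤ ∫ ω, (Real.log ‖glCLM (SS n ω) v‖ - Real.log ‖v‖) ∂(PP μ) := by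
  obtain ⟨γ, h1, h2⟩ := exists_between hγ'
  have hk : 0 < c + |γ| := by positivity
  set ε := (γ - γ') / 2 / (c + |γ|) with hεd
  have hε : 0 < ε := by
    have : 0 < γ - γ' := by linarith
    positivity
  obtain ⟨N, hN⟩ := unif_bad μ hc hNB (fun v hv => no_slow μ hNB hqi h2 hv)
    (ENNReal.ofReal_pos.2 hε)
  obtain ⟨n₁, hn₁⟩ := exists_nat_ge ((c + |γ|) * N / ((γ - γ') / 2))
  refine ⟨n₁, fun n hn v hv => ?_⟩
  refine le_trans ?_ (lower_aux μ hc hNB hε hN hv n)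
  have hn' : (n₁ : ℝ) ≤ n := by exact_mod_cast hn
  have hpos : 0 < (γ - γ') / 2 := by linarith
  have h3 : (c + |γ|) * N ≤ n * ((γ - γ') / 2) := by
    rw [div_le_iff₀ hpos] at hn₁
    exact hn₁.trans (by gcongr)
  have h4 : (c + |γ|) * (n * ε) = n * ((γ - γ') / 2) := by
    rw [hεd]; field_simp
  rw [h4]
  linarith

end withMeasure

/-- angle between vectors -/
def DD (p q : Ed d) : ℝ := Real.sqrt (Gr p q) / (‖p‖ * ‖q‖)

/-- contraction ratio -/
def rat (g : GLd d) (p q : Ed d) : ℝ := DD (glCLM g p) (glCLM g q) / DD p q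

lemma ne_zero_of_Gr {p q : Ed d} (h : 0 < Gr p q) : p ≠ 0 ∧ q ≠ 0 := by
  constructor
  · rintro rfl; simp [Gr] at h
  · rintro rfl; simp [Gr] at h

lemma DD_nonneg (p q : Ed d) : 0 ≤ DD p q := by unfold DD; positivity

lemma DD_pos {p q : Ed d} (h : 0 < Gr p q) : 0 < DD p q := by
  obtain ⟨hp, hq⟩ := ne_zero_of_Gr h
  have := norm_pos_iff.2 hp
  have := norm_pos_iff.2 hq
  have := Real.sqrt_pos.2 h
  unfold DD; positivity

lemma DD_smul (p q : Ed d) {a b : ℝ} (ha : a ≠ 0) (hb : b ≠ 0) : DD (a • p) (b • q) = DD p q := by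
  unfold DD
  rw [Gr_smul_smul, Real.sqrt_mul (sq_nonneg _), Real.sqrt_sq_eq_abs, norm_smul, norm_smul,
    Real.norm_eq_abs, Real.norm_eq_abs, abs_mul]
  have h1 : |a| ≠ 0 := abs_ne_zero.2 ha
  have h2 : |b| ≠ 0 := abs_ne_zero.2 hb
  have e : |a| * ‖p‖ * (|b| * ‖q‖) = (|a| * |b|) * (‖p‖ * ‖q‖) := by ring
  rw [e, mul_div_mul_left _ _ (mul_ne_zero h1 h2)]

lemma Gr_glCLM_pos (g : GLd d) {p q : Ed d} (h : 0 < Gr p q) :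
    0 < Gr (glCLM g p) (glCLM g q) := by
  have h1 := sqrt_Gr_le g⁻¹ (glCLM g p) (glCLM g q)
  rw [glCLM_leftInv, glCLM_leftInv] at h1
  have h2 := Real.sqrt_pos.2 h
  by_contra h3
  rw [Real.sqrt_eq_zero_of_nonpos (not_lt.1 h3), mul_zero] at h1
  linarith

lemma rat_nonneg (g : GLd d) (p q : Ed d) : 0 ≤ rat g p q :=
  div_nonneg (DD_nonneg _ _) (DD_nonneg _ _)

lemma rat_pos (g : GLd d) {p q : Ed d} (h : 0 < Gr p q) : 0 < rat g p q :=
  div_pos (DD_pos (Gr_glCLM_pos g h)) (DD_pos h)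

lemma rat_mul (g h : GLd d) {p q : Ed d} (hpq : 0 < Gr p q) :
    rat (g * h) p q = rat g (glCLM h p) (glCLM h q) * rat h p q := by
  have h1 := DD_pos hpq
  have h2 := DD_pos (Gr_glCLM_pos h hpq)
  unfold rat
  rw [glCLM_mul_apply, glCLM_mul_apply]
  field_simp

lemma rat_one {p q : Ed d} (hpq : 0 < Gr p q) : rat 1 p q = 1 := by
  have h1 := DD_pos hpq
  unfold rat
  rw [glCLM_one]
  exact div_self h1.ne'

lemma measurable_rat (p q : Ed d) : Measurable (fun g : GLd d => rat g p q) := by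
  unfold rat DD
  exact ((continuous_sqrtGr p q).measurable.div
    ((continuous_glCLM_apply p).norm.measurable.mul
      (continuous_glCLM_apply q).norm.measurable)).div_const _

lemma log_rat_le (hd : 2 ≤ d) (g : GLd d) {p q : Ed d} (h : 0 < Gr p q) :
    Real.log (rat g p q) ≤ Real.log (N2 g) - (Real.log ‖glCLM g p‖ - Real.log ‖p‖)
      - (Real.log ‖glCLM g q‖ - Real.log ‖q‖) := by
  obtain ⟨hp, hq⟩ := ne_zero_of_Gr h
  have hp' := norm_pos_iff.2 hp
  have hq' := norm_pos_iff.2 hq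
  have hgp := norm_pos_iff.2 (glCLM_ne_zero g hp)
  have hgq := norm_pos_iff.2 (glCLM_ne_zero g hq)
  have hs := Real.sqrt_pos.2 h
  have hN := N2_pos hd g
  have h1 : rat g p q ≤ N2 g * (‖p‖ * ‖q‖) / (‖glCLM g p‖ * ‖glCLM g q‖) := by
    unfold rat DD
    rw [div_div_eq_mul_div, div_le_iff₀ hs, div_mul_eq_mul_div, div_mul_eq_mul_div]
    refine div_le_div_of_nonneg_right ?_ (by positivity)
    have := mul_le_mul_of_nonneg_right (sqrt_Gr_le g p q) (mul_pos hp' hq').le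
    linarith
  have h2 := Real.log_le_log (rat_pos g h) h1
  rw [Real.log_div (by positivity) (by positivity), Real.log_mul (by positivity) (by positivity),
    Real.log_mul (by positivity) (by positivity), Real.log_mul (by positivity) (by positivity)] at h2
  linarith

lemma NB.log_rat (hd : 2 ≤ d) {a : ℝ} {g : GLd d} (hg : NB a g) {p q : Ed d} (h : 0 < Gr p q) :
    |Real.log (rat g p q)| ≤ 4 * a := by
  have key : ∀ (g : GLd d), NB a g → ∀ p q : Ed d, 0 < Gr p q → Real.log (rat g p q) ≤ 4 * a := by
    intro g hg p q h
    obtain ⟨hp, hq⟩ := ne_zero_of_Gr h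
    have h1 := log_rat_le hd g h
    have h2 := (abs_le.1 (hg.log_N2 hd)).2
    have h3 := (abs_le.1 (hg.log_le hp)).1
    have h4 := (abs_le.1 (hg.log_le hq)).1
    linarith
  rw [abs_le]
  refine ⟨?_, key g hg p q h⟩
  have h1 := key g⁻¹ hg.inv _ _ (Gr_glCLM_pos g h)
  have h2 := rat_mul g⁻¹ g h
  rw [inv_mul_cancel, rat_one h] at h2
  have h3 := congrArg Real.log h2
  rw [Real.log_one, Real.log_mul (rat_pos _ (Gr_glCLM_pos g h)).ne' (rat_pos _ h).ne'] at h3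
  linarith

lemma NB.rat_rpow (hd : 2 ≤ d) {a α : ℝ} (hα : 0 ≤ α) {g : GLd d} (hg : NB a g) {p q : Ed d}
    (h : 0 < Gr p q) : rat g p q ^ α ≤ Real.exp (α * (4 * a)) := by
  rw [Real.rpow_def_of_pos (rat_pos g h), Real.exp_le_exp, mul_comm]
  exact mul_le_mul_of_nonneg_left (abs_le.1 (hg.log_rat hd h)).2 hα

/-- projective translation -/
lemma pdelta_eq (x y : Pd d) : pdelta x y = DD x.rep y.rep := rfl

lemma pact_rep (g : GLd d) (x : Pd d) : ∃ a : ℝ, a ≠ 0 ∧ (pact g x).rep = a • glCLM g x.rep := by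
  have h : pact g x = Projectivization.mk ℝ (glCLM g x.rep) (glCLM_ne_zero g x.rep_nonzero) := by
    conv_lhs => rw [← x.mk_rep]
    rfl
  rw [h]
  obtain ⟨a, ha⟩ := Projectivization.exists_smul_eq_mk_rep ℝ (glCLM g x.rep)
    (glCLM_ne_zero g x.rep_nonzero)
  exact ⟨a, a.ne_zero, ha.symm⟩

lemma ratio_eq (g : GLd d) (x y : Pd d) :
    pdelta (pact g x) (pact g y) / pdelta x y = rat g x.rep y.rep := by
  obtain ⟨a, ha, hx⟩ := pact_rep g x
  obtain ⟨b, hb, hy⟩ := pact_rep g y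
  rw [pdelta_eq, pdelta_eq, hx, hy, DD_smul _ _ ha hb]
  rfl

lemma Gr_rep_pos {x y : Pd d} (h : x ≠ y) : 0 < Gr x.rep y.rep := by
  refine lt_of_le_of_ne (Gr_nonneg _ _) fun h0 => h ?_
  have h1 : |(inner ℝ x.rep y.rep : ℝ)| = ‖x.rep‖ * ‖y.rep‖ := by
    have h2 : (inner ℝ x.rep y.rep : ℝ) ^ 2 = (‖x.rep‖ * ‖y.rep‖) ^ 2 := by
      unfold Gr at h0; rw [mul_pow]; linarith
    rw [← Real.sqrt_sq_eq_abs, h2, Real.sqrt_sq (by positivity)]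
  have h2 : ‖(inner ℝ x.rep y.rep : ℝ)‖ = ‖x.rep‖ * ‖y.rep‖ := h1
  rw [norm_inner_eq_norm_iff x.rep_nonzero y.rep_nonzero] at h2
  obtain ⟨r, hr, hy⟩ := h2
  rw [← x.mk_rep, ← y.mk_rep, Projectivization.mk_eq_mk_iff']
  exact ⟨r⁻¹, by rw [hy, smul_smul, inv_mul_cancel₀ hr, one_smul]⟩

lemma lintegral_mconv (μ ν : Measure (GLd d)) [SFinite μ] [SFinite ν] {f : GLd d → ENNReal}
    (hf : Measurable f) : ∫⁻ g, f g ∂(mconv μ ν) = ∫⁻ h, ∫⁻ g, f (g * h) ∂μ ∂ν := by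
  unfold mconv
  rw [lintegral_map hf (by fun_prop), lintegral_prod_symm' _ (by fun_prop)]

lemma measurable_inner_lint (μ : Measure (GLd d)) [SFinite μ] {f : GLd d → ENNReal}
    (hf : Measurable f) : Measurable fun h => ∫⁻ g, f (g * h) ∂μ := by
  have : Measurable (fun p : GLd d × GLd d => f (p.1 * p.2)) := by fun_prop
  exact this.lintegral_prod_left'

instance (μ : Measure (GLd d)) [IsProbabilityMeasure μ] (n : ℕ) :
    IsProbabilityMeasure (mconvN μ n) := by
  rw [mconvN_eq]
  exact Measure.isProbabilityMeasure_map (measurable_SS n).aemeasurable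

lemma lintegral_mconvN_add (μ : Measure (GLd d)) [IsProbabilityMeasure μ] (m n : ℕ) :
    ∀ {f : GLd d → ENNReal}, Measurable f →
      ∫⁻ g, f g ∂(mconvN μ (m + n)) = ∫⁻ h, ∫⁻ g, f (g * h) ∂(mconvN μ m) ∂(mconvN μ n) := by
  induction n with
  | zero =>
    intro f hf
    change _ = ∫⁻ h, ∫⁻ g, f (g * h) ∂(mconvN μ m) ∂(Measure.dirac 1)
    rw [lintegral_dirac' _ (measurable_inner_lint _ hf)]
    simp
  | succ n ih =>
    intro f hf
    rw [← add_assoc, mconvN_succ, mconvN_succ, lintegral_mconv _ _ hf,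
      lintegral_mconv _ _ (measurable_inner_lint _ hf)]
    refine lintegral_congr fun k => ?_
    rw [ih (f := fun g => f (g * k)) (by fun_prop)]
    simp only [mul_assoc]

lemma exists_tv (μ ν : Measure (GLd d)) [IsProbabilityMeasure μ] [IsProbabilityMeasure ν] :
    ∃ P : Measure (GLd d), μ ≤ ν + P ∧ P Set.univ ≤ ENNReal.ofReal (tvDist μ ν) := by
  set s := μ.toSignedMeasure - ν.toSignedMeasure with hs
  set j := s.toJordanDecomposition with hj
  refine ⟨j.posPart, ?_, ?_⟩
  · rw [Measure.le_iff]
    intro E hE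
    have h1 : s = j.posPart.toSignedMeasure - j.negPart.toSignedMeasure :=
      (SignedMeasure.toSignedMeasure_toJordanDecomposition s).symm
    have h2 := congrArg (fun t : SignedMeasure (GLd d) => t E) h1
    simp only [hs, FunLike.coe_sub, Pi.sub_apply,
      Measure.toSignedMeasure_apply_measurable hE] at h2
    have h3 : μ.real E ≤ ν.real E + j.posPart.real E := by
      have : 0 ≤ j.negPart.real E := measureReal_nonneg
      linarith
    rw [Measure.add_apply, ← ENNReal.toReal_le_toReal (measure_ne_top _ _) (by finiteness),
      ENNReal.toReal_add (by finiteness) (by finiteness)]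
    exact h3
  · unfold tvDist
    rw [ENNReal.ofReal_toReal]
    · unfold SignedMeasure.totalVariation
      rw [Measure.add_apply]
      exact le_self_add
    · unfold SignedMeasure.totalVariation
      rw [Measure.add_apply]
      finiteness

lemma tv_iter (μ ν P : Measure (GLd d)) [IsProbabilityMeasure μ] [IsProbabilityMeasure ν]
    (hP : μ ≤ ν + P) (B : ENNReal) (n : ℕ) : ∀ {f : GLd d → ENNReal}, Measurable f →
      (∀ g, f g ≤ B) →
      ∫⁻ g, f g ∂(mconvN μ n) ≤ ∫⁻ g, f g ∂(mconvN ν n) + n * (B * P Set.univ) := by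
  induction n with
  | zero => intro f hf hB; simp [mconvN]
  | succ n ih =>
    intro f hf hB
    rw [mconvN_succ, mconvN_succ, lintegral_mconv _ _ hf, lintegral_mconv _ _ hf]
    have hle : ∀ h, ∫⁻ g, f (g * h) ∂(mconvN ν n) ≤ B := fun h =>
      (lintegral_mono fun g => hB _).trans (by simp)
    calc ∫⁻ h, ∫⁻ g, f (g * h) ∂(mconvN μ n) ∂μ
        ≤ ∫⁻ h, (∫⁻ g, f (g * h) ∂(mconvN ν n) + n * (B * P Set.univ)) ∂μ :=
          lintegral_mono fun h => ih (f := fun g => f (g * h)) (by fun_prop) (fun g => hB _)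
      _ = ∫⁻ h, ∫⁻ g, f (g * h) ∂(mconvN ν n) ∂μ + n * (B * P Set.univ) := by
          rw [lintegral_add_right _ measurable_const]; simp
      _ ≤ ∫⁻ h, ∫⁻ g, f (g * h) ∂(mconvN ν n) ∂(ν + P) + n * (B * P Set.univ) := by
          gcongr
      _ ≤ (∫⁻ h, ∫⁻ g, f (g * h) ∂(mconvN ν n) ∂ν + B * P Set.univ) + n * (B * P Set.univ) := by
          rw [lintegral_add_measure]
          gcongr
          exact (lintegral_mono hle).trans (by simp)
      _ = _ := by push_cast; ring

lemma ae_mconvN_NB (μ : Measure (GLd d)) [IsProbabilityMeasure μ] {c : ℝ}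
    (hNB : μ {g | NB c g}ᶜ = 0) {f : GLd d → ENNReal} (hf : Measurable f) (n : ℕ) {B : ENNReal}
    (hB : ∀ g, NB (c * n) g → f g ≤ B) : ∀ᵐ g ∂(mconvN μ n), f g ≤ B := by
  rw [mconvN_eq, ae_map_iff (measurable_SS n).aemeasurable (measurableSet_le hf measurable_const)]
  filter_upwards [ae_all μ hNB] with ω hω
  exact hB _ (SS_NB n hω)

lemma tv_iter' (μ ν P : Measure (GLd d)) [IsProbabilityMeasure μ] [IsProbabilityMeasure ν]
    (hP : μ ≤ ν + P) {c : ℝ} (hμ : μ {g | NB c g}ᶜ = 0)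
    (B : ENNReal) (n : ℕ) {f : GLd d → ENNReal} (hf : Measurable f)
    (hB : ∀ g, NB (c * n) g → f g ≤ B) :
    ∫⁻ g, f g ∂(mconvN μ n) ≤ ∫⁻ g, f g ∂(mconvN ν n) + n * (B * P Set.univ) := by
  calc ∫⁻ g, f g ∂(mconvN μ n) ≤ ∫⁻ g, min (f g) B ∂(mconvN μ n) := by
        apply lintegral_mono_ae
        filter_upwards [ae_mconvN_NB μ hμ hf n hB] with g hg
        exact le_min le_rfl hg
    _ ≤ ∫⁻ g, min (f g) B ∂(mconvN ν n) + n * (B * P Set.univ) :=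
        tv_iter μ ν P hP B n (hf.min measurable_const) fun g => min_le_right _ _
    _ ≤ _ := by gcongr; exact min_le_left _ _

/-- the extended-real integrand -/
def FF (α : ℝ) (p q : Ed d) (g : GLd d) : ENNReal := ENNReal.ofReal (rat g p q ^ α)

lemma measurable_FF (α : ℝ) (p q : Ed d) : Measurable (FF α p q) :=
  ((measurable_rat p q).pow_const α).ennreal_ofReal

lemma FF_mul (α : ℝ) {p q : Ed d} (h : 0 < Gr p q) (g k : GLd d) :
    FF α p q (g * k) = FF α (glCLM k p) (glCLM k q) g * FF α p q k := by
  unfold FF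
  rw [rat_mul g k h, Real.mul_rpow (rat_nonneg _ _ _) (rat_nonneg _ _ _),
    ENNReal.ofReal_mul (Real.rpow_nonneg (rat_nonneg _ _ _) _)]

lemma submul (μ : Measure (GLd d)) [IsProbabilityMeasure μ] (α : ℝ) {m n : ℕ} {a b : ENNReal}
    (ha : ∀ p q : Ed d, 0 < Gr p q → ∫⁻ g, FF α p q g ∂(mconvN μ m) ≤ a)
    (hb : ∀ p q : Ed d, 0 < Gr p q → ∫⁻ g, FF α p q g ∂(mconvN μ n) ≤ b)
    (p q : Ed d) (h : 0 < Gr p q) : ∫⁻ g, FF α p q g ∂(mconvN μ (m + n)) ≤ a * b := by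
  rw [lintegral_mconvN_add μ m n (measurable_FF α p q)]
  simp only [FF_mul α h]
  calc _ ≤ ∫⁻ k, a * FF α p q k ∂(mconvN μ n) := by
        apply lintegral_mono
        intro k
        simp only
        rw [lintegral_mul_const _ (measurable_FF _ _ _)]
        gcongr
        exact ha _ _ (Gr_glCLM_pos k h)
    _ = a * ∫⁻ k, FF α p q k ∂(mconvN μ n) := lintegral_const_mul _ (measurable_FF _ _ _)
    _ ≤ a * b := by gcongr; exact hb p q h

lemma submul_pow (μ : Measure (GLd d)) [IsProbabilityMeasure μ] (α : ℝ) {m : ℕ} {a : ENNReal}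
    (ha : ∀ p q : Ed d, 0 < Gr p q → ∫⁻ g, FF α p q g ∂(mconvN μ m) ≤ a) (k : ℕ) :
    ∀ p q : Ed d, 0 < Gr p q → ∫⁻ g, FF α p q g ∂(mconvN μ (m * k)) ≤ a ^ k := by
  induction k with
  | zero =>
    intro p q h
    change ∫⁻ g, FF α p q g ∂(Measure.dirac 1) ≤ _
    rw [lintegral_dirac' _ (measurable_FF α p q)]
    simp [FF, rat_one h]
  | succ k ih =>
    intro p q h
    rw [mul_add, mul_one, pow_succ]
    exact submul μ α ih ha p q h

lemma trivial_bound (hd : 2 ≤ d) (μ : Measure (GLd d)) [IsProbabilityMeasure μ] {α c : ℝ}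
    (hα : 0 ≤ α) (hNB : μ {g | NB c g}ᶜ = 0) (n : ℕ) (p q : Ed d) (h : 0 < Gr p q) :
    ∫⁻ g, FF α p q g ∂(mconvN μ n) ≤ ENNReal.ofReal (Real.exp (α * (4 * (c * n)))) := by
  calc _ ≤ ∫⁻ g, ENNReal.ofReal (Real.exp (α * (4 * (c * n)))) ∂(mconvN μ n) :=
        lintegral_mono_ae (ae_mconvN_NB μ hNB (measurable_FF α p q) n fun g hg =>
          ENNReal.ofReal_le_ofReal (hg.rat_rpow hd hα h))
    _ = _ := by simp

lemma tendsto_L12 (hd : 2 ≤ d) (μ : Measure (GLd d)) [IsProbabilityMeasure μ] {c : ℝ}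
    (hNB : μ {g | NB c g}ᶜ = 0) :
    Tendsto (fun n : ℕ => (n : ℝ)⁻¹ * ∫ g, Real.log (N2 g) ∂(mconvN μ n)) atTop
      (nhds (L12 μ)) := by
  apply exists_lim μ hNB ⊤ (C := 2)
  · simp
  · exact (measurable_N2 hd).log
  · intro g _ a ha
    exact ha.log_N2 hd
  · intro g _ h _
    rw [← Real.log_mul (N2_pos hd g).ne' (N2_pos hd h).ne']
    exact Real.log_le_log (N2_pos hd _) (N2_mul_le g h)

lemma neg_drift (hd : 2 ≤ d) (μ : Measure (GLd d)) [IsProbabilityMeasure μ] {c : ℝ}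
    (hc : 0 < c) (hNB : μ {g | NB c g}ᶜ = 0) (hqi : QuasiIrreducible μ) (hgap : L2 μ < L1 μ) :
    ∃ n : ℕ, 1 ≤ n ∧ ∃ η : ℝ, 0 < η ∧ ∀ p q : Ed d, 0 < Gr p q →
      ∫ ω, Real.log (rat (SS n ω) p q) ∂(PP μ) ≤ -η := by
  set s := (2 * L1 μ - L12 μ) / 4 with hs
  have hs0 : 0 < s := by unfold L2 at hgap; linarith
  obtain ⟨n₁, hn₁⟩ := uniform_growth μ hc hNB hqi (show L1 μ - s < L1 μ by linarith)
  have h1 := (tendsto_order.1 (tendsto_L12 hd μ hNB)).2 (L12 μ + s) (by linarith)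
  obtain ⟨n, h2, hn1, hn⟩ := (h1.and ((eventually_ge_atTop n₁).and (eventually_ge_atTop 1))).exists
  have hn0 : (0 : ℝ) < n := by exact_mod_cast hn
  refine ⟨n, hn, s * n, by positivity, fun p q hpq => ?_⟩
  obtain ⟨hp, hq⟩ := ne_zero_of_Gr hpq
  have h3 : ∫ ω, Real.log (N2 (SS n ω)) ∂(PP μ) ≤ (L12 μ + s) * n := by
    rw [integral_mconvN μ n (measurable_N2 hd).log, inv_mul_lt_iff₀ hn0] at h2
    linarith
  have i0 : Integrable (fun ω => Real.log (N2 (SS n ω))) (PP μ) := by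
    apply integrable_of_bound μ (φ := fun g => Real.log (N2 g)) (measurable_N2 hd).log n
      (C := 2 * (c * n))
    filter_upwards [ae_all μ hNB] with ω hω
    exact (SS_NB n hω).log_N2 hd
  have i1 : ∀ v : Ed d, v ≠ 0 → Integrable
      (fun ω => Real.log ‖glCLM (SS n ω) v‖ - Real.log ‖v‖) (PP μ) := fun v hv =>
    integrable_of_bound μ (measurable_logorbit v) n (ae_logorbit μ hNB n hv)
  have i2 : Integrable (fun ω => Real.log (rat (SS n ω) p q)) (PP μ) := by
    apply integrable_of_bound μ (φ := fun g => Real.log (rat g p q)) (measurable_rat p q).log n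
      (C := 4 * (c * n))
    filter_upwards [ae_all μ hNB] with ω hω
    exact (SS_NB n hω).log_rat hd hpq
  have i3 : Integrable (fun ω => Real.log (N2 (SS n ω)) -
      (Real.log ‖glCLM (SS n ω) p‖ - Real.log ‖p‖)) (PP μ) := i0.sub (i1 p hp)
  have h4 : ∫ ω, Real.log (rat (SS n ω) p q) ∂(PP μ) ≤
      ∫ ω, (Real.log (N2 (SS n ω)) - (Real.log ‖glCLM (SS n ω) p‖ - Real.log ‖p‖)
      - (Real.log ‖glCLM (SS n ω) q‖ - Real.log ‖q‖)) ∂(PP μ) :=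
    integral_mono i2 (i3.sub (i1 q hq)) fun ω => log_rat_le hd _ hpq
  rw [integral_sub i3 (i1 q hq), integral_sub i0 (i1 p hp)] at h4
  have h5 := hn₁ n hn1 p hp
  have h6 := hn₁ n hn1 q hq
  have e : (L12 μ + s) * n - (L1 μ - s) * n - (L1 μ - s) * n = -(s * n) := by
    rw [hs]; ring
  linarith

lemma contraction_one (hd : 2 ≤ d) (μ : Measure (GLd d)) [IsProbabilityMeasure μ] {c : ℝ}
    (hc : 0 < c) (hNB : μ {g | NB c g}ᶜ = 0) (hqi : QuasiIrreducible μ) (hgap : L2 μ < L1 μ) :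
    ∃ n : ℕ, 1 ≤ n ∧ ∃ α : ℝ, 0 < α ∧ α ≤ 1 ∧ ∃ ρ : ℝ, 0 < ρ ∧ ρ < 1 ∧
      ∀ p q : Ed d, 0 < Gr p q → ∫⁻ g, FF α p q g ∂(mconvN μ n) ≤ ENNReal.ofReal ρ := by
  obtain ⟨n, hn, η, hη, h⟩ := neg_drift hd μ hc hNB hqi hgap
  have hn0 : (0 : ℝ) < n := by exact_mod_cast hn
  set M : ℝ := 4 * (c * n) with hM
  have hM0 : 0 < M := by positivity
  set α : ℝ := min 1 (min (1 / M) (η / (2 * M ^ 2))) with hα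
  have hα0 : 0 < α := by
    rw [hα]; apply lt_min one_pos; apply lt_min <;> positivity
  have hα1 : α ≤ 1 := min_le_left _ _
  have hαM : α * M ≤ 1 := by
    have : α ≤ 1 / M := (min_le_right _ _).trans (min_le_left _ _)
    rwa [le_div_iff₀ hM0] at this
  have hαη : α * M ^ 2 ≤ η / 2 := by
    have : α ≤ η / (2 * M ^ 2) := (min_le_right _ _).trans (min_le_right _ _)
    rw [le_div_iff₀ (by positivity)] at this
    linarith
  refine ⟨n, hn, α, hα0, hα1, max (1 - α * η / 2) (1 / 2), by positivity, ?_, ?_⟩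
  · apply max_lt _ (by norm_num)
    have : 0 < α * η := by positivity
    linarith
  intro p q hpq
  have hb : ∀ᵐ ω ∂(PP μ), |Real.log (rat (SS n ω) p q)| ≤ M := by
    filter_upwards [ae_all μ hNB] with ω hω
    exact (SS_NB n hω).log_rat hd hpq
  have i2 : Integrable (fun ω => Real.log (rat (SS n ω) p q)) (PP μ) :=
    integrable_of_bound μ (φ := fun g => Real.log (rat g p q)) (measurable_rat p q).log n hb
  have i1 : Integrable (fun ω => 1 + α ^ 2 * M ^ 2 + α * Real.log (rat (SS n ω) p q)) (PP μ) :=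
    (integrable_const _).add (i2.const_mul _)
  have hpt : ∀ᵐ ω ∂(PP μ), rat (SS n ω) p q ^ α ≤
      1 + α ^ 2 * M ^ 2 + α * Real.log (rat (SS n ω) p q) := by
    filter_upwards [hb] with ω hω
    rw [Real.rpow_def_of_pos (rat_pos _ hpq), mul_comm]
    set l := Real.log (rat (SS n ω) p q)
    have h1 : |α * l| ≤ α * M := by
      rw [abs_mul, abs_of_pos hα0]; gcongr
    have h2 := (abs_le.1 (Real.abs_exp_sub_one_sub_id_le (h1.trans hαM))).2
    have h3 : (α * l) ^ 2 ≤ (α * M) ^ 2 := by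
      rw [← sq_abs]; gcongr
    nlinarith
  rw [mconvN_eq, lintegral_map (measurable_FF α p q) (measurable_SS n)]
  calc _ ≤ ∫⁻ ω, ENNReal.ofReal (1 + α ^ 2 * M ^ 2 + α * Real.log (rat (SS n ω) p q)) ∂(PP μ) := by
        apply lintegral_mono_ae
        filter_upwards [hpt] with ω hω
        exact ENNReal.ofReal_le_ofReal hω
    _ = ENNReal.ofReal (∫ ω, (1 + α ^ 2 * M ^ 2 + α * Real.log (rat (SS n ω) p q)) ∂(PP μ)) := by
        rw [ofReal_integral_eq_lintegral_ofReal i1]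
        filter_upwards [hpt] with ω hω
        exact (Real.rpow_nonneg (rat_nonneg _ _ _) _).trans hω
    _ ≤ _ := by
        apply ENNReal.ofReal_le_ofReal
        refine le_trans ?_ (le_max_left _ _)
        rw [integral_add (integrable_const _) (i2.const_mul _), integral_const_mul]
        simp only [integral_const, probReal_univ, smul_eq_mul, one_mul]
        have h1 := mul_le_mul_of_nonneg_left (h p q hpq) hα0.le
        have h2 := mul_le_mul_of_nonneg_left hαη hα0.le
        nlinarith

lemma kalpha_le (μ : Measure (GLd d)) {α b : ℝ} (hb : 0 ≤ b)
    (h : ∀ p q : Ed d, 0 < Gr p q → ∫⁻ g, FF α p q g ∂μ ≤ ENNReal.ofReal b) :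
    kalpha α μ ≤ b := by
  apply Real.sSup_le _ hb
  rintro x ⟨v₁, v₂, hne, rfl⟩
  simp only [ratio_eq]
  rw [integral_eq_lintegral_of_nonneg_ae
    (ae_of_all _ fun g => Real.rpow_nonneg (rat_nonneg _ _ _) _)
    ((measurable_rat _ _).pow_const α).aestronglyMeasurable]
  exact ENNReal.toReal_le_of_le_ofReal hb (h _ _ (Gr_rep_pos hne))

theorem contraction_of_kalpha
    (d : ℕ) (hd : 2 ≤ d) (S : Set (GLd d)) (hS : IsCompact S)
    (μ₀ : Measure (GLd d)) [IsProbabilityMeasure μ₀] (hμ₀S : μ₀ Sᶜ = 0)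
    (hqi : QuasiIrreducible μ₀) (hgap : L2 μ₀ < L1 μ₀) :
    ∃ α : ℝ, 0 < α ∧ α ≤ 1 ∧ ∃ θ : ℝ, 1 < θ ∧ ∃ C : ℝ, 0 < C ∧ ∃ ε : ℝ, 0 < ε ∧
      ∀ (μ : Measure (GLd d)) [IsProbabilityMeasure μ], μ Sᶜ = 0 →
        tvDist μ μ₀ < ε → ∀ n : ℕ, 1 ≤ n →
          kalpha α (mconvN μ n) ≤ C * θ ^ (-(n : ℝ)) := by
  obtain ⟨c, hc, hcS⟩ := exists_NB S hS
  have hNB : ∀ μ : Measure (GLd d), μ Sᶜ = 0 → μ {g | NB c g}ᶜ = 0 := fun μ hμ =>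
    ae_mono_K hμ hcS
  obtain ⟨n₀, hn₀, α, hα0, hα1, ρ₁, hρ0, hρ1, h⟩ :=
    contraction_one hd μ₀ hc (hNB μ₀ hμ₀S) hqi hgap
  have hn0 : (0 : ℝ) < n₀ := by exact_mod_cast hn₀
  set B : ℝ := Real.exp (α * (4 * (c * n₀))) with hB
  have hB0 : 0 < B := Real.exp_pos _
  set ρ : ℝ := (1 + ρ₁) / 2 with hρ
  have hρpos : 0 < ρ := by linarith
  have hρlt : ρ < 1 := by linarith
  have h1ρ : 0 < 1 - ρ₁ := by linarith
  refine ⟨α, hα0, hα1, ρ ^ (-(1 / (n₀ : ℝ))), ?_, B / ρ, by positivity,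
    (1 - ρ₁) / (2 * n₀ * B), by positivity, ?_⟩
  · exact Real.one_lt_rpow_of_pos_of_lt_one_of_neg hρpos hρlt (by
      have : 0 < 1 / (n₀ : ℝ) := by positivity
      linarith)
  intro μ _ hμS htv n _
  obtain ⟨P, hP, hPt⟩ := exists_tv μ μ₀
  have htv0 : 0 ≤ tvDist μ μ₀ := ENNReal.toReal_nonneg
  have hblock : ∀ p q : Ed d, 0 < Gr p q →
      ∫⁻ g, FF α p q g ∂(mconvN μ n₀) ≤ ENNReal.ofReal ρ := by
    intro p q hpq
    refine (tv_iter' μ μ₀ P hP (hNB μ hμS) (ENNReal.ofReal B) n₀ (measurable_FF α p q)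
      (fun g hg => ENNReal.ofReal_le_ofReal (hg.rat_rpow hd hα0.le hpq))).trans ?_
    calc _ ≤ ENNReal.ofReal ρ₁ + n₀ * (ENNReal.ofReal B * ENNReal.ofReal (tvDist μ μ₀)) := by
          gcongr
          exact h p q hpq
      _ = ENNReal.ofReal (ρ₁ + n₀ * (B * tvDist μ μ₀)) := by
          rw [ENNReal.ofReal_add hρ0.le (by positivity), ENNReal.ofReal_mul hn0.le,
            ENNReal.ofReal_mul hB0.le, ENNReal.ofReal_natCast]
      _ ≤ _ := by
          apply ENNReal.ofReal_le_ofReal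
          rw [lt_div_iff₀ (by positivity)] at htv
          rw [hρ]
          linarith
  have hfin : ∀ p q : Ed d, 0 < Gr p q →
      ∫⁻ g, FF α p q g ∂(mconvN μ n) ≤ ENNReal.ofReal (ρ ^ (n / n₀) * B) := by
    intro p q hpq
    have h1 := submul μ α (submul_pow μ α hblock (n / n₀))
      (trivial_bound hd μ hα0.le (hNB μ hμS) (n % n₀)) p q hpq
    rw [Nat.div_add_mod] at h1
    refine h1.trans ?_
    rw [ENNReal.ofReal_mul (by positivity), ENNReal.ofReal_pow hρpos.le]
    gcongr
    have : (n % n₀ : ℕ) ≤ (n₀ : ℝ) := by exact_mod_cast (Nat.mod_lt n hn₀).le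
    rw [hB]
    gcongr
  refine kalpha_le _ ?_ fun p q hpq => (hfin p q hpq).trans (ENNReal.ofReal_le_ofReal ?_)
  · positivity
  rw [← Real.rpow_mul hρpos.le]
  have e : -(1 / (n₀ : ℝ)) * (-(n : ℝ)) = n / n₀ := by ring
  rw [e]
  have h2 : (n : ℝ) / n₀ - 1 ≤ (n / n₀ : ℕ) := by
    have h3 : (n : ℝ) = n₀ * (n / n₀ : ℕ) + (n % n₀ : ℕ) := by
      exact_mod_cast (Nat.div_add_mod n n₀).symm
    have h4 : ((n % n₀ : ℕ) : ℝ) ≤ n₀ := by exact_mod_cast (Nat.mod_lt n hn₀).le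
    rw [sub_le_iff_le_add, div_le_iff₀ hn0]
    linarith
  have h5 : ρ ^ (n / n₀) ≤ ρ ^ ((n : ℝ) / n₀ - 1) := by
    rw [← Real.rpow_natCast]
    exact Real.rpow_le_rpow_of_exponent_ge hρpos hρlt.le h2
  rw [Real.rpow_sub_one hρpos.ne'] at h5
  calc ρ ^ (n / n₀) * B ≤ ρ ^ ((n : ℝ) / n₀) / ρ * B := by gcongr
    _ = _ := by ring

end
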